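/- arXiv:1408.5659 — 2 statements merged into one kernel-verified Lean document; each statement's English description precedes it below -/
import Mathlib

section
/- Let 1 < q < ∞ and α, β ≥ 0. Then for every ε > 0: limsup_{n→∞} n^{1/q}·[ln(n+1)]^{−1/(2q)+ε}·E(M¹ ∩ B_{2q}^{α,β}, P_n)_{w_{α,β}, q} = ∞. -/
open MeasureTheory Set Filter
open scoped ENNReal

noncomputable section

/-- The Jacobi weight `w_{α,β}(x) = (1+x)^α (1-x)^β`. -/
def jacobi (α β : ℝ) (x : ℝ) : ℝ := (1 + x) ^ α * (1 - x) ^ β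

/-- `φ(x) = √(1-x²)`. -/
def phiW (x : ℝ) : ℝ := Real.sqrt (1 - x ^ 2)

/-- The `L^p` norm of `g` on the interval `[a,b]` (essential sup when `p = ∞`). -/
def LpOn (g : ℝ → ℝ) (p : ℝ≥0∞) (a b : ℝ) : ℝ≥0∞ :=
  eLpNorm g p (volume.restrict (Icc a b))

/-- The `k`-th symmetric difference `Δ_h^k(f,x)` relative to `[-1,1]`. -/
def symmDelta (k : ℕ) (h : ℝ) (f : ℝ → ℝ) (x : ℝ) : ℝ :=
  if (x - k * h / 2 ∈ Icc (-1 : ℝ) 1 ∧ x + k * h / 2 ∈ Icc (-1 : ℝ) 1) then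
    ∑ i ∈ Finset.range (k + 1), ((k.choose i : ℝ) * (-1 : ℝ) ^ (k - i) * f (x - k * h / 2 + i * h))
  else 0

/-- Main-part weighted modulus `Ω_φ^k(f,δ)_{w,p}`. -/
def OmegaMain (k : ℕ) (f : ℝ → ℝ) (δ : ℝ) (wt : ℝ → ℝ) (p : ℝ≥0∞) : ℝ≥0∞ :=
  ⨆ h ∈ Ioc (0 : ℝ) δ,
    LpOn (fun x => wt x * symmDelta k (h * phiW x) f x) p
      (-1 + 2 * (k : ℝ) ^ 2 * h ^ 2) (1 - 2 * (k : ℝ) ^ 2 * h ^ 2)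

/-- Forward part `Ω→_φ^k(f,δ)_{w,p}`. -/
def OmegaFwd (k : ℕ) (f : ℝ → ℝ) (δ : ℝ) (wt : ℝ → ℝ) (p : ℝ≥0∞) : ℝ≥0∞ :=
  ⨆ h ∈ Ioc (0 : ℝ) (2 * (k : ℝ) ^ 2 * δ ^ 2),
    LpOn (fun x => wt x * symmDelta k h f (x + k * h / 2)) p
      (-1) (-1 + 2 * (k : ℝ) ^ 2 * δ ^ 2)

/-- Backward part `Ω←_φ^k(f,δ)_{w,p}`. -/
def OmegaBwd (k : ℕ) (f : ℝ → ℝ) (δ : ℝ) (wt : ℝ → ℝ) (p : ℝ≥0∞) : ℝ≥0∞ :=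
  ⨆ h ∈ Ioc (0 : ℝ) (2 * (k : ℝ) ^ 2 * δ ^ 2),
    LpOn (fun x => wt x * symmDelta k h f (x - k * h / 2)) p
      (1 - 2 * (k : ℝ) ^ 2 * δ ^ 2) 1

/-- Weighted Ditzian–Totik modulus `ω_φ^k(f,δ)_{w,p}`. -/
def omegaDT (k : ℕ) (f : ℝ → ℝ) (δ : ℝ) (wt : ℝ → ℝ) (p : ℝ≥0∞) : ℝ≥0∞ :=
  OmegaMain k f δ wt p + OmegaFwd k f δ wt p + OmegaBwd k f δ wt p

/-- `f` is `k`-monotone on `(-1,1)`: all `k`-th divided differences over `k+1` distinct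
points of `(-1,1)` are nonnegative. -/
def kMonotoneOn (k : ℕ) (f : ℝ → ℝ) : Prop :=
  ∀ x : Fin (k + 1) → ℝ, Function.Injective x → (∀ i, x i ∈ Ioo (-1 : ℝ) 1) →
    0 ≤ ∑ i, f (x i) / ∏ j ∈ Finset.univ.erase i, (x i - x j)

/-- `M^k`, the class of `k`-monotone functions on `(-1,1)`. -/
def MSet (k : ℕ) : Set (ℝ → ℝ) := {f | kMonotoneOn k f}

/-- `M_+^k`, the `k`-monotone functions on `(-1,1)` vanishing on `(-1,0]`. -/
def MPlus (k : ℕ) : Set (ℝ → ℝ) :=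
  {f | kMonotoneOn k f ∧ ∀ x : ℝ, -1 < x → x ≤ 0 → f x = 0}

/-- `J_p = (-1/p, ∞)` for finite `p`, `[0,∞)` for `p = ∞`. -/
def Jset (p : ℝ≥0∞) : Set ℝ := if p = ∞ then Ici 0 else Ioi (-1 / p.toReal)

/-- `W_p^{α,β}`. -/
def WSet (p : ℝ≥0∞) (α β : ℝ) : Set (ℝ → ℝ) :=
  {f | Measurable f ∧ LpOn (fun x => jacobi α β x * f x) p (-1) 1 ≠ ⊤}

/-- `B_p^{α,β}`, the unit sphere of `W_p^{α,β}`. -/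
def BSet (p : ℝ≥0∞) (α β : ℝ) : Set (ℝ → ℝ) :=
  {f | Measurable f ∧ LpOn (fun x => jacobi α β x * f x) p (-1) 1 = 1}

/-- Best weighted approximation `E_n(f)_{w,q}` by polynomials of degree at most `n`. -/
def En (n : ℕ) (f : ℝ → ℝ) (wt : ℝ → ℝ) (q : ℝ≥0∞) : ℝ≥0∞ :=
  ⨅ P ∈ {P : Polynomial ℝ | P.natDegree ≤ n},
    LpOn (fun x => wt x * (f x - P.eval x)) q (-1) 1

/-- `E(X, P_n)_{w,q}`. -/
def EClass (X : Set (ℝ → ℝ)) (n : ℕ) (wt : ℝ → ℝ) (q : ℝ≥0∞) : ℝ≥0∞ :=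
  ⨆ f ∈ X, En n f wt q



namespace S8

open Real Polynomial

lemma int_cos_mul (m : ℕ) (hm : 0 < m) : ∫ θ in (0:ℝ)..π, cos (m * θ) = 0 := by
  have hm' : (m:ℝ) ≠ 0 := by positivity
  rw [intervalIntegral.integral_comp_mul_left (fun x => cos x) hm']
  simp [integral_cos, Real.sin_nat_mul_pi]

lemma orth_mono (d : ℕ) : ∀ m : ℕ, d < m → ∫ θ in (0:ℝ)..π, cos θ ^ d * cos (m * θ) = 0 := by
  induction d with
  | zero => intro m hm; simpa using int_cos_mul m hm
  | succ d ih =>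
    intro m hm
    have e : ∀ θ : ℝ, cos θ ^ (d+1) * cos (m * θ)
        = (1/2) * (cos θ ^ d * cos ((m+1 : ℕ) * θ)) + (1/2) * (cos θ ^ d * cos ((m-1 : ℕ) * θ)) := by
      intro θ
      have h1 : ((m+1 : ℕ) : ℝ) * θ = m * θ + θ := by push_cast; ring
      have h2 : ((m-1 : ℕ) : ℝ) * θ = m * θ - θ := by
        rw [Nat.cast_sub (by omega)]; push_cast; ring
      rw [h1, h2, cos_add, cos_sub]; ring
    simp_rw [e]
    rw [intervalIntegral.integral_add, intervalIntegral.integral_const_mul,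
      intervalIntegral.integral_const_mul, ih _ (by omega), ih _ (by omega)]
    · simp
    all_goals exact Continuous.intervalIntegrable (by fun_prop) _ _

lemma orth_poly (S : ℝ[X]) (m : ℕ) (h : S.natDegree < m) :
    ∫ θ in (0:ℝ)..π, S.eval (cos θ) * cos (m * θ) = 0 := by
  simp_rw [Polynomial.eval_eq_sum_range, Finset.sum_mul]
  rw [intervalIntegral.integral_finsetSum]
  · apply Finset.sum_eq_zero
    intro i hi
    simp_rw [mul_assoc]
    rw [intervalIntegral.integral_const_mul, orth_mono i m (by simp at hi; omega)]
    simp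
  · intro i _
    exact Continuous.intervalIntegrable (by fun_prop) _ _

/-- derivative of `sin (m θ) R (cos θ)` -/
def Gd (m : ℕ) (R : ℝ[X]) (θ : ℝ) : ℝ :=
  m * cos (m * θ) * R.eval (cos θ) - sin (m * θ) * sin θ * R.derivative.eval (cos θ)

lemma Gd_cont (m : ℕ) (R : ℝ[X]) : Continuous (Gd m R) := by
  unfold Gd; fun_prop

lemma Gd_hasDeriv (m : ℕ) (R : ℝ[X]) (θ : ℝ) :
    HasDerivAt (fun θ => sin (m * θ) * R.eval (cos θ)) (Gd m R θ) θ := by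
  have h1 : HasDerivAt (fun θ : ℝ => sin (m * θ)) (cos (m * θ) * m) θ := by
    have := ((hasDerivAt_id θ).const_mul (m:ℝ)).sin
    simpa using this
  have h2 : HasDerivAt (fun θ : ℝ => R.eval (cos θ)) (R.derivative.eval (cos θ) * (- sin θ)) θ :=
    HasDerivAt.comp θ (R.hasDerivAt (cos θ)) (hasDerivAt_cos θ)
  refine (h1.mul h2).congr_deriv ?_
  unfold Gd; ring

lemma Gd_orth (m : ℕ) (P R : ℝ[X]) (h : P.natDegree + R.natDegree + 1 < m) :
    ∫ θ in (0:ℝ)..π, P.eval (cos θ) * Gd m R θ = 0 := by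
  have e : ∀ θ : ℝ, P.eval (cos θ) * Gd m R θ
      = m * ((P * R).eval (cos θ) * cos (m * θ))
        - (1/2) * ((P * R.derivative).eval (cos θ) * cos ((m-1 : ℕ) * θ))
        + (1/2) * ((P * R.derivative).eval (cos θ) * cos ((m+1 : ℕ) * θ)) := by
    intro θ
    have h1 : ((m+1 : ℕ) : ℝ) * θ = m * θ + θ := by push_cast; ring
    have h2 : ((m-1 : ℕ) : ℝ) * θ = m * θ - θ := by
      rw [Nat.cast_sub (by omega)]; push_cast; ring
    rw [h1, h2, cos_add, cos_sub]; unfold Gd; simp only [eval_mul]; ring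
  simp_rw [e]
  have d1 : (P * R).natDegree < m := lt_of_le_of_lt natDegree_mul_le (by omega)
  have d2 : (P * R.derivative).natDegree < m - 1 := by
    refine lt_of_le_of_lt natDegree_mul_le ?_
    have := natDegree_derivative_le R
    omega
  rw [intervalIntegral.integral_add, intervalIntegral.integral_sub,
    intervalIntegral.integral_const_mul,
    intervalIntegral.integral_const_mul, intervalIntegral.integral_const_mul,
    orth_poly _ _ d1, orth_poly _ _ d2, orth_poly _ (m+1) (by omega)]
  · simp
  all_goals exact Continuous.intervalIntegrable (by fun_prop) _ _

lemma Gd_step (m : ℕ) (R : ℝ[X]) (φ : ℝ) (h0 : 0 ≤ φ) (h1 : φ ≤ π) :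
    ∫ θ in (0:ℝ)..π, (if cos φ ≤ cos θ then 1 else 0) * Gd m R θ
      = sin (m * φ) * R.eval (cos φ) := by
  have hi : ∫ θ in (0:ℝ)..φ, Gd m R θ = sin (m * φ) * R.eval (cos φ) := by
    rw [intervalIntegral.integral_eq_sub_of_hasDerivAt (fun x _ => Gd_hasDeriv m R x)
      ((Gd_cont m R).intervalIntegrable _ _)]
    simp
  rw [← hi, intervalIntegral.integral_of_le pi_pos.le, intervalIntegral.integral_of_le h0]
  rw [← integral_indicator measurableSet_Ioc, ← integral_indicator measurableSet_Ioc]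
  congr 1
  ext θ
  by_cases hθ : θ ∈ Ioc 0 π
  · by_cases hφ : θ ≤ φ
    · have : cos φ ≤ cos θ := cos_le_cos_of_nonneg_of_le_pi hθ.1.le h1 hφ
      simp [Set.indicator, hθ.1, hθ.2, hφ, this]
    · have : ¬ cos φ ≤ cos θ := by
        push Not at hφ ⊢
        exact cos_lt_cos_of_nonneg_of_le_pi h0 hθ.2 hφ
      simp [Set.indicator, hφ, this]
  · have : θ ∉ Ioc 0 φ := fun h => hθ ⟨h.1, h.2.trans h1⟩
    simp [Set.indicator, hθ, this]

lemma Gd_sum {ι : Type*} (s : Finset ι) (m : ℕ) (a : ι → ℝ) (R : ι → ℝ[X]) (θ : ℝ) :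
    Gd m (∑ i ∈ s, Polynomial.C (a i) * R i) θ = ∑ i ∈ s, a i * Gd m (R i) θ := by
  unfold Gd
  simp only [eval_finsetSum, derivative_sum, derivative_C_mul, eval_mul, eval_C, Finset.mul_sum]
  rw [← Finset.sum_sub_distrib]
  exact Finset.sum_congr rfl (fun i _ => by ring)

/-- Fejer-type kernel polynomial -/
def Lam (M : ℕ) (φ : ℝ) : ℝ[X] :=
  Polynomial.C (1 / (M:ℝ)) * (2 * (∑ k ∈ Finset.range M, Polynomial.C (cos (k * φ)) * Chebyshev.T ℝ (k:ℤ)) - 1)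

lemma Lam_deg (M : ℕ) (φ : ℝ) : (Lam M φ).natDegree ≤ M := by
  unfold Lam
  refine (natDegree_C_mul_le _ _).trans ?_
  refine (natDegree_sub_le _ _).trans ?_
  rw [natDegree_one, Nat.max_zero]
  rw [show (2:ℝ[X]) = Polynomial.C 2 from rfl]
  refine (natDegree_C_mul_le _ _).trans ?_
  apply natDegree_sum_le_of_forall_le
  intro k hk
  refine (natDegree_C_mul_le _ _).trans ?_
  rw [Chebyshev.natDegree_T]
  simp at hk ⊢; omega

lemma Lam_eval (M : ℕ) (φ θ : ℝ) : (Lam M φ).eval (cos θ)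
    = (1 / (M:ℝ)) * (2 * (∑ k ∈ Finset.range M, cos (k * φ) * cos (k * θ)) - 1) := by
  unfold Lam
  simp only [eval_mul, eval_C, eval_sub, eval_finsetSum, eval_one, eval_ofNat,
    Chebyshev.T_real_cos, Int.cast_natCast]

lemma Lam_bound (M : ℕ) (hM : 0 < M) (φ θ : ℝ) : |(Lam M φ).eval (cos θ)| ≤ 3 := by
  have hM' : (1:ℝ) ≤ M := by exact_mod_cast hM
  rw [Lam_eval, abs_mul, abs_of_nonneg (by positivity), one_div, inv_mul_le_iff₀ (by positivity)]
  have h : |∑ k ∈ Finset.range M, cos (k * φ) * cos (k * θ)| ≤ M := by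
    refine (Finset.abs_sum_le_sum_abs _ _).trans ?_
    refine (Finset.sum_le_sum (g := fun _ => (1:ℝ)) ?_).trans (by simp)
    intro k _
    rw [abs_mul]
    exact mul_le_one₀ (abs_cos_le_one _) (abs_nonneg _) (abs_cos_le_one _)
  rw [abs_le] at h ⊢
  constructor <;> linarith [h.1, h.2]

lemma Lam_deriv_bound (M : ℕ) (hM : 0 < M) (φ θ : ℝ) :
    |sin θ * (Lam M φ).derivative.eval (cos θ)| ≤ 2 * M := by
  have hM' : (1:ℝ) ≤ M := by exact_mod_cast hM
  have h2 : HasDerivAt (fun θ : ℝ => (Lam M φ).eval (cos θ))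
      ((Lam M φ).derivative.eval (cos θ) * (- sin θ)) θ :=
    HasDerivAt.comp θ ((Lam M φ).hasDerivAt (cos θ)) (hasDerivAt_cos θ)
  have h3 : HasDerivAt (fun θ : ℝ => (Lam M φ).eval (cos θ))
      ((1 / (M:ℝ)) * (2 * (∑ k ∈ Finset.range M, cos (k * φ) * (- sin (k * θ) * k)))) θ := by
    simp_rw [Lam_eval]
    refine HasDerivAt.const_mul _ (HasDerivAt.sub_const _ (HasDerivAt.const_mul _ ?_))
    apply HasDerivAt.fun_sum
    intro k _
    refine HasDerivAt.const_mul _ ?_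
    have := ((hasDerivAt_id θ).const_mul (k:ℝ)).cos
    simpa using this
  have h4 := h2.unique h3
  have h5 : |sin θ * (Lam M φ).derivative.eval (cos θ)|
      = |(1 / (M:ℝ)) * (2 * (∑ k ∈ Finset.range M, cos (k * φ) * (- sin (k * θ) * k)))| := by
    rw [← h4, ← abs_neg]; congr 1; ring
  rw [h5, abs_mul, abs_of_nonneg (by positivity : (0:ℝ) ≤ 1 / M), one_div,
    inv_mul_le_iff₀ (by positivity), abs_mul, abs_two]
  have h : |∑ k ∈ Finset.range M, cos (k * φ) * (- sin (k * θ) * k)| ≤ M * M := by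
    refine (Finset.abs_sum_le_sum_abs _ _).trans ?_
    refine (Finset.sum_le_sum (g := fun _ => (M:ℝ)) ?_).trans (by simp)
    intro k hk
    rw [abs_mul, abs_mul, abs_neg, Nat.abs_cast]
    have hk' : (k:ℝ) ≤ M := by exact_mod_cast (Finset.mem_range.1 hk).le
    have := mul_le_one₀ (abs_cos_le_one (k * φ)) (abs_nonneg _) (abs_sin_le_one (k * θ))
    calc _ = (|cos (k * φ)| * |sin (k * θ)|) * k := by ring
      _ ≤ 1 * k := by gcongr
      _ ≤ M := by linarith
  nlinarith

lemma CD (φ θ : ℝ) (M : ℕ) : (cos θ - cos φ) *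
    (2 * (∑ k ∈ Finset.range M, cos (k * φ) * cos (k * θ)) - 1)
    = cos (M * θ) * cos (M * φ - φ) - cos (M * θ - θ) * cos (M * φ) := by
  induction M with
  | zero => simp
  | succ M ih =>
    rw [Finset.sum_range_succ]
    have e : (cos θ - cos φ) * (2 * (∑ k ∈ Finset.range M, cos (k * φ) * cos (k * θ)
        + cos (M * φ) * cos (M * θ)) - 1)
        = (cos θ - cos φ) * (2 * (∑ k ∈ Finset.range M, cos (k * φ) * cos (k * θ)) - 1)
          + (cos θ - cos φ) * 2 * (cos (M * φ) * cos (M * θ)) := by ring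
    rw [e, ih]
    push_cast
    rw [show ((M:ℝ)+1) * θ - θ = M * θ by ring, show ((M:ℝ)+1) * φ - φ = M * φ by ring,
      show ((M:ℝ)+1) * θ = M * θ + θ by ring, show ((M:ℝ)+1) * φ = M * φ + φ by ring,
      cos_add, cos_add, cos_sub, cos_sub]
    ring

lemma Lam_decay (M : ℕ) (hM : 0 < M) (φ θ : ℝ) (hφ : cos (M * φ) = 0) :
    |cos θ - cos φ| * |(Lam M φ).eval (cos θ)| ≤ |sin φ| / M := by
  have hM' : (1:ℝ) ≤ M := by exact_mod_cast hM
  rw [← abs_mul, Lam_eval, mul_left_comm, CD, hφ, cos_sub, hφ]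
  rw [abs_mul, abs_of_nonneg (by positivity : (0:ℝ) ≤ 1 / M), one_div, inv_mul_eq_div]
  refine div_le_div_of_nonneg_right ?_ (by positivity)
  simp only [zero_mul, zero_add, mul_zero, sub_zero]
  rw [abs_mul, abs_mul]
  have h1 := abs_cos_le_one (M * θ)
  have h2 := abs_sin_le_one (M * φ)
  calc _ = (|cos (M * θ)| * |sin (M * φ)|) * |sin φ| := by ring
    _ ≤ 1 * |sin φ| := by
      gcongr
      exact mul_le_one₀ h1 (abs_nonneg _) h2
    _ = _ := by ring

lemma Lam_self_aux (φ : ℝ) (M : ℕ) :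
    sin φ * (2 * (∑ k ∈ Finset.range M, cos (k * φ) * cos (k * φ)) - 1 - M)
      = sin (M * φ) * cos (M * φ - φ) - sin φ := by
  induction M with
  | zero => simp
  | succ M ih =>
    rw [Finset.sum_range_succ]
    have e : sin φ * (2 * (∑ k ∈ Finset.range M, cos (k * φ) * cos (k * φ)
        + cos (M * φ) * cos (M * φ)) - 1 - (M+1:ℕ))
        = sin φ * (2 * (∑ k ∈ Finset.range M, cos (k * φ) * cos (k * φ)) - 1 - M)
          + sin φ * (2 * cos (M * φ) ^ 2 - 1) := by push_cast; ring
    rw [e, ih]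
    push_cast
    rw [show ((M:ℝ)+1) * φ - φ = M * φ by ring, show ((M:ℝ)+1) * φ = M * φ + φ by ring,
      sin_add, cos_sub]
    have := sin_sq_add_cos_sq (M * φ)
    linear_combination (sin φ) * this

lemma Lam_self (M : ℕ) (hM : 0 < M) (φ : ℝ) (hφ : cos (M * φ) = 0) (hs : sin φ ≠ 0) :
    (Lam M φ).eval (cos φ) = 1 := by
  have hM' : (1:ℝ) ≤ M := by exact_mod_cast hM
  rw [Lam_eval]
  have h := Lam_self_aux φ M
  rw [cos_sub, hφ] at h
  have h2 := sin_sq_add_cos_sq (M * φ)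
  rw [hφ] at h2
  have h3 : sin φ * (2 * (∑ k ∈ Finset.range M, cos (k * φ) * cos (k * φ)) - 1 - M) = 0 := by
    rw [h]; linear_combination sin φ * h2
  have h4 := (mul_eq_zero.1 h3).resolve_left hs
  rw [show 2 * (∑ k ∈ Finset.range M, cos (k * φ) * cos (k * φ)) - 1 = M by linarith]
  field_simp

lemma sin_mul_le (m : ℕ) (θ : ℝ) : |sin (m * θ)| ≤ m * |sin θ| := by
  induction m with
  | zero => simp
  | succ m ih =>
    push_cast
    rw [add_mul, one_mul, sin_add]
    refine (abs_add_le _ _).trans ?_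
    rw [abs_mul, abs_mul]
    have h1 := abs_cos_le_one θ
    have h2 := abs_cos_le_one (m * θ)
    have := mul_le_of_le_one_right (abs_nonneg (sin (m * θ))) h1
    have := mul_le_of_le_one_left (abs_nonneg (sin θ)) h2
    nlinarith

def RR (M : ℕ) (φ : ℝ) (e s : ℕ) : ℝ[X] := Lam M φ ^ (e+1) * (1 - X^2) ^ (s+1)

lemma RR_deg (M : ℕ) (φ : ℝ) (e s : ℕ) : (RR M φ e s).natDegree ≤ (e+1) * M + 2 * (s+1) := by
  unfold RR
  refine natDegree_mul_le.trans ?_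
  gcongr
  · refine natDegree_pow_le.trans ?_
    gcongr; exact Lam_deg M φ
  · refine natDegree_pow_le.trans ?_
    rw [mul_comm]
    gcongr
    compute_degree

lemma RR_eval (M : ℕ) (φ : ℝ) (e s : ℕ) (x : ℝ) :
    (RR M φ e s).eval x = (Lam M φ).eval x ^ (e+1) * (1 - x^2) ^ (s+1) := by
  simp [RR]

lemma Gd_RR_bound (M : ℕ) (hM : 0 < M) (φ : ℝ) (e s m : ℕ) (θ : ℝ) :
    |Gd m (RR M φ e s) θ| ≤ (3 * m + (e+1) * (2 * M) + 6 * (s+1) * m)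
      * |(Lam M φ).eval (cos θ)| ^ e * (1 - cos θ ^2) ^ (s+1) := by
  set l := (Lam M φ).eval (cos θ) with hl
  set l' := (Lam M φ).derivative.eval (cos θ) with hl'
  have hb : |l| ≤ 3 := Lam_bound M hM φ θ
  have hb' : |sin θ * l'| ≤ 2 * M := Lam_deriv_bound M hM φ θ
  have hs : |sin (m * θ)| ≤ m * |sin θ| := sin_mul_le m θ
  have hS : 1 - cos θ ^ 2 = |sin θ| ^ 2 := by rw [sq_abs, sin_sq]
  have e1 : Gd m (RR M φ e s) θ = l ^ e * ((m * cos (m * θ) * l * (1 - cos θ^2)^(s+1))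
      - sin (m*θ) * (e+1) * (sin θ * l') * (1 - cos θ^2)^(s+1)
      + sin (m * θ) * sin θ * (2 * (s+1)) * cos θ * l * (1 - cos θ^2)^s) := by
    unfold Gd
    rw [RR_eval, ← hl]
    unfold RR
    simp only [derivative_mul, derivative_pow_succ, derivative_sub, derivative_one, derivative_X_pow,
      eval_mul, eval_add, eval_pow, eval_sub, eval_one, eval_X, eval_C, eval_zero, ← hl, ← hl',
      Nat.cast_ofNat, map_ofNat, eval_ofNat, map_add, map_one, eval_natCast, map_natCast]
    simp
    ring
  rw [e1, hS, abs_mul, abs_pow]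
  have hsin : (0:ℝ) ≤ |sin θ| := abs_nonneg _
  have t1 : |m * cos (m * θ) * l * (|sin θ|^2)^(s+1)| ≤ 3 * m * (|sin θ|^2)^(s+1) := by
    rw [abs_mul, abs_mul, abs_mul, Nat.abs_cast, abs_of_nonneg (by positivity : 0 ≤ (|sin θ|^2)^(s+1))]
    refine mul_le_mul_of_nonneg_right ?_ (by positivity)
    have := abs_cos_le_one (m * θ)
    calc _ ≤ (m:ℝ) * 1 * 3 := by gcongr
      _ = _ := by ring
  have t2 : |sin (m*θ) * (e+1) * (sin θ * l') * (|sin θ|^2)^(s+1)|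
      ≤ (e+1) * (2 * M) * (|sin θ|^2)^(s+1) := by
    rw [abs_mul, abs_mul, abs_mul, abs_of_nonneg (by positivity : 0 ≤ (|sin θ|^2)^(s+1)),
      abs_of_nonneg (by positivity : (0:ℝ) ≤ (e:ℝ)+1)]
    gcongr
    have := abs_sin_le_one (m * θ)
    calc |sin (m*θ)| * ((e:ℝ)+1) ≤ 1 * (e+1) := by gcongr
      _ = _ := by ring
  have t3 : |sin (m * θ) * sin θ * (2 * (s+1)) * cos θ * l * (|sin θ|^2)^s|
      ≤ 6 * (s+1) * m * (|sin θ|^2)^(s+1) := by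
    simp only [abs_mul, abs_of_nonneg (by positivity : 0 ≤ (|sin θ|^2)^s)]
    rw [abs_of_nonneg (by positivity : (0:ℝ) ≤ (s:ℝ)+1), abs_two]
    have := abs_cos_le_one θ
    calc |sin (m * θ)| * |sin θ| * (2 * ((s:ℝ)+1)) * |cos θ| * |l| * (|sin θ|^2)^s
        ≤ (m * |sin θ|) * |sin θ| * (2 * ((s:ℝ)+1)) * 1 * 3 * (|sin θ|^2)^s := by gcongr
      _ = _ := by ring
  have t4 := (abs_add_le (m * cos (m * θ) * l * (|sin θ|^2)^(s+1)
      - sin (m*θ) * (e+1) * (sin θ * l') * (|sin θ|^2)^(s+1))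
      (sin (m * θ) * sin θ * (2 * (s+1)) * cos θ * l * (|sin θ|^2)^s)).trans
      (add_le_add (abs_sub _ _) le_rfl)
  have t5 := t4.trans (add_le_add (add_le_add t1 t2) t3)
  calc _ ≤ _ := mul_le_mul_of_nonneg_left t5 (by positivity : (0:ℝ) ≤ |l| ^ e)
    _ = _ := by ring

end S8


namespace S8

open Real Polynomial

/-- sum of steps -/
def stepF (K : ℕ) (h φ : ℕ → ℝ) (x : ℝ) : ℝ :=
  ∑ j ∈ Finset.range K, h j * (if cos (φ j) ≤ x then 1 else 0)

lemma stepF_meas (K : ℕ) (h φ : ℕ → ℝ) : Measurable (stepF K h φ) := by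
  unfold stepF
  refine Finset.measurable_fun_sum _ (fun j _ => Measurable.const_mul ?_ _)
  exact Measurable.ite measurableSet_Ici measurable_const measurable_const

lemma stepF_mono (K : ℕ) (h φ : ℕ → ℝ) (hh : ∀ j, 0 ≤ h j) : Monotone (stepF K h φ) := by
  intro x y hxy
  unfold stepF
  refine Finset.sum_le_sum (fun j _ => mul_le_mul_of_nonneg_left ?_ (hh j))
  split_ifs with h1 h2
  · exact le_rfl
  · exact absurd (h1.trans hxy) h2
  · exact zero_le_one
  · exact le_rfl

lemma step_int (m : ℕ) (R : ℝ[X]) (φ : ℝ) :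
    IntervalIntegrable (fun θ => (if cos φ ≤ cos θ then 1 else 0) * Gd m R θ) volume 0 π := by
  have h := (Gd_cont m R).intervalIntegrable (μ := volume) 0 π
  rw [intervalIntegrable_iff] at h ⊢
  refine Integrable.bdd_mul (c := 1) h ?_ ?_
  · refine Measurable.aestronglyMeasurable ?_
    exact Measurable.ite (measurableSet_le measurable_const (by fun_prop)) measurable_const measurable_const
  · refine Eventually.of_forall (fun x => ?_)
    split_ifs <;> simp

lemma pairing (K : ℕ) (h φ : ℕ → ℝ) (h0 : ∀ j, 0 ≤ φ j) (h1 : ∀ j, φ j ≤ π) (m : ℕ)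
    (P R : ℝ[X]) (hd : P.natDegree + R.natDegree + 1 < m) :
    ∫ x in (-1:ℝ)..1, ((stepF K h φ x - P.eval x) * Gd m R (arccos x)) * √(1 - x ^ 2)⁻¹
      = ∑ j ∈ Finset.range K, h j * (sin (m * φ j) * R.eval (cos (φ j))) := by
  rw [← Chebyshev.integral_measureT (fun x => (stepF K h φ x - P.eval x) * Gd m R (arccos x)),
    Chebyshev.integral_measureT_eq_integral_cos]
  have e : ∫ θ in (0:ℝ)..π, (stepF K h φ (cos θ) - P.eval (cos θ)) * Gd m R (arccos (cos θ))
      = ∫ θ in (0:ℝ)..π, ((∑ j ∈ Finset.range K, h j * ((if cos (φ j) ≤ cos θ then 1 else 0) * Gd m R θ))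
        - P.eval (cos θ) * Gd m R θ) := by
    refine intervalIntegral.integral_congr (fun θ hθ => ?_)
    rw [uIcc_of_le pi_pos.le] at hθ
    rw [arccos_cos hθ.1 hθ.2, sub_mul]
    congr 1
    unfold stepF
    rw [Finset.sum_mul]
    exact Finset.sum_congr rfl (fun j _ => by ring)
  rw [e]
  have hc : Continuous (fun θ => P.eval (cos θ) * Gd m R θ) := by
    have := Gd_cont m R
    fun_prop
  rw [intervalIntegral.integral_sub _ (hc.intervalIntegrable _ _), Gd_orth m P R hd, sub_zero,
    intervalIntegral.integral_finsetSum]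
  · refine Finset.sum_congr rfl (fun j _ => ?_)
    rw [intervalIntegral.integral_const_mul, Gd_step m R _ (h0 j) (h1 j)]
  · intro j _
    exact (step_int m R (φ j)).const_mul _
  · have := IntervalIntegrable.sum (μ := volume) (a := 0) (b := π) (Finset.range K)
      (f := fun j θ => h j * ((if cos (φ j) ≤ cos θ then 1 else 0) * Gd m R θ))
      (fun j _ => (step_int m R (φ j)).const_mul _)
    have e2 : (fun θ => ∑ j ∈ Finset.range K, h j * ((if cos (φ j) ≤ cos θ then 1 else 0) * Gd m R θ))
        = ∑ j ∈ Finset.range K, (fun j θ => h j * ((if cos (φ j) ≤ cos θ then 1 else 0) * Gd m R θ)) j := by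
      funext θ; simp only [Finset.sum_apply]
    rw [e2]; exact this

lemma jacobi_pos (α β x : ℝ) (hx : x ∈ Ioo (-1:ℝ) 1) : 0 < jacobi α β x := by
  unfold jacobi
  have : 0 < 1 + x := by linarith [hx.1]
  have : 0 < 1 - x := by linarith [hx.2]
  positivity

lemma jacobi_meas (α β : ℝ) : Measurable (jacobi α β) := by
  unfold jacobi; fun_prop

lemma duality (q : ℝ≥0∞) (hq1 : 1 < q) (hq2 : q ≠ ∞) (p' : ℝ)
    (hpp : q.toReal.HolderConjugate p') (α β : ℝ)
    (K : ℕ) (h φ : ℕ → ℝ) (h0 : ∀ j, 0 ≤ φ j) (h1 : ∀ j, φ j ≤ π) (m : ℕ)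
    (P R : ℝ[X]) (hd : P.natDegree + R.natDegree + 1 < m) :
    ENNReal.ofReal (∑ j ∈ Finset.range K, h j * (sin (m * φ j) * R.eval (cos (φ j))))
      ≤ LpOn (fun x => jacobi α β x * (stepF K h φ x - P.eval x)) q (-1) 1 *
        (∫⁻ x in Ioo (-1:ℝ) 1,
          ENNReal.ofReal (|Gd m R (arccos x)| * √(1 - x ^ 2)⁻¹ / jacobi α β x) ^ p') ^ (1 / p') := by
  have hI : volume.restrict (Icc (-1:ℝ) 1) = volume.restrict (Ioo (-1:ℝ) 1) :=
    (Measure.restrict_congr_set Ioo_ae_eq_Icc).symm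
  have hI2 : volume.restrict (Ioc (-1:ℝ) 1) = volume.restrict (Ioo (-1:ℝ) 1) :=
    (Measure.restrict_congr_set Ioo_ae_eq_Ioc).symm
  have hq0 : q ≠ 0 := by rintro rfl; simp at hq1
  unfold LpOn
  rw [eLpNorm_eq_lintegral_rpow_enorm_toReal hq0 hq2, hI, ← pairing K h φ h0 h1 m P R hd,
    intervalIntegral.integral_of_le (by norm_num), hI2]
  have mG : Measurable (fun x => Gd m R (arccos x)) :=
    ((Gd_cont m R).comp continuous_arccos).measurable
  have mf := stepF_meas K h φ
  have mj := jacobi_meas α β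
  refine (ENNReal.ofReal_le_ofReal (le_abs_self _)).trans ?_
  rw [← Real.norm_eq_abs, ofReal_norm]
  refine (enorm_integral_le_lintegral_enorm _).trans ?_
  refine le_trans ?_ (ENNReal.lintegral_mul_le_Lp_mul_Lq _ hpp (by
      have : Measurable (fun x => jacobi α β x * (stepF K h φ x - P.eval x)) :=
        mj.mul (mf.sub P.continuous.measurable)
      exact this.enorm.aemeasurable) (by
      have : Measurable (fun x => |Gd m R (arccos x)| * √(1 - x ^ 2)⁻¹ / jacobi α β x) := by
        refine Measurable.div ?_ mj
        refine Measurable.mul ?_ (by fun_prop)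
        simpa [Real.norm_eq_abs] using mG.norm
      exact this.ennreal_ofReal.aemeasurable))
  refine setLIntegral_mono' measurableSet_Ioo (fun x hx => ?_)
  have hw := jacobi_pos α β x hx
  simp only [Pi.mul_apply]
  rw [← ofReal_norm, ← ofReal_norm, ← ENNReal.ofReal_mul (norm_nonneg _)]
  refine ENNReal.ofReal_le_ofReal (le_of_eq ?_)
  simp only [norm_mul, Real.norm_eq_abs, abs_of_pos hw]
  rw [abs_of_nonneg (sqrt_nonneg _)]
  field_simp

end S8


namespace S8

open Real Polynomial

def sg (j : ℕ) : ℝ := ((5:ℝ) ^ (j+1))⁻¹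

def ph (j : ℕ) : ℝ := π / 2 * sg j

lemma sg_pos (j : ℕ) : 0 < sg j := by unfold sg; positivity

lemma sg_le (j : ℕ) : sg j ≤ 1 / 5 := by
  unfold sg
  rw [one_div]
  apply inv_anti₀ (by norm_num)
  calc (5:ℝ) = 5 ^ 1 := by norm_num
    _ ≤ 5 ^ (j+1) := pow_le_pow_right₀ (by norm_num) (by omega)

lemma ph_pos (j : ℕ) : 0 < ph j := by
  have := sg_pos j; unfold ph; positivity

lemma ph_lt (j : ℕ) : ph j ≤ π / 10 := by
  have := sg_le j; unfold ph
  have := pi_pos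
  nlinarith

lemma ph_le_pi (j : ℕ) : ph j ≤ π := by linarith [ph_lt j, pi_pos]

lemma ph_le (j : ℕ) : ph j ≤ 2 * sg j := by
  unfold ph
  have := pi_le_four
  have := sg_pos j
  nlinarith

lemma sin_ph_pos (j : ℕ) : 0 < sin (ph j) :=
  sin_pos_of_pos_of_lt_pi (ph_pos j) (by linarith [ph_lt j, pi_pos])

lemma sin_ph_le (j : ℕ) : |sin (ph j)| ≤ 2 * sg j := by
  rw [abs_of_pos (sin_ph_pos j)]
  exact (sin_le (ph_pos j).le).trans (ph_le j)

lemma x_lower (j : ℕ) : sg j ^ 2 / 2 ≤ 1 - cos (ph j) := by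
  have := cos_le_one_sub_mul_cos_sq (x := ph j)
    (by rw [abs_of_pos (ph_pos j)]; exact ph_le_pi j)
  have e : 2 / π ^ 2 * ph j ^ 2 = sg j ^ 2 / 2 := by
    unfold ph
    have := pi_pos
    field_simp
  linarith

lemma x_upper (j : ℕ) : 1 - cos (ph j) ≤ 5 / 4 * sg j ^ 2 := by
  have := one_sub_sq_div_two_le_cos (x := ph j)
  have e : ph j ^ 2 / 2 ≤ 5 / 4 * sg j ^ 2 := by
    unfold ph
    have h1 := pi_lt_d2
    have h2 := pi_pos
    have h3 : π ^ 2 ≤ 10 := by nlinarith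
    have : (π / 2 * sg j)^2/2 = π^2 / 8 * sg j ^ 2 := by ring
    rw [this]
    exact mul_le_mul_of_nonneg_right (by linarith) (sq_nonneg _)
  linarith

lemma five_pow (a : ℕ) : ∃ b : ℕ, 5 ^ a = 4 * b + 1 := by
  induction a with
  | zero => exact ⟨0, rfl⟩
  | succ a ih =>
    obtain ⟨b, hb⟩ := ih
    exact ⟨5 * b + 1, by rw [pow_succ, hb]; ring⟩

lemma node (K j : ℕ) (hj : j < K) : ∃ b : ℕ, ((25 ^ K : ℕ) : ℝ) * ph j = π / 2 + b * (2 * π) := by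
  obtain ⟨b, hb⟩ := five_pow (2 * K - (j+1))
  refine ⟨b, ?_⟩
  have h1 : (25:ℝ) ^ K = 5 ^ (2 * K - (j+1)) * 5 ^ (j+1) := by
    rw [← pow_add, show 2 * K - (j+1) + (j+1) = 2 * K by omega, pow_mul]; norm_num
  have h2 : (5:ℝ) ^ (2 * K - (j+1)) = 4 * b + 1 := by exact_mod_cast hb
  unfold ph sg
  push_cast
  rw [h1, h2]
  field_simp
  ring

lemma node_cos (K j : ℕ) (hj : j < K) : cos (((25 ^ K : ℕ) : ℝ) * ph j) = 0 := by
  obtain ⟨b, hb⟩ := node K j hj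
  rw [hb, cos_add_nat_mul_two_pi, cos_pi_div_two]

lemma node_sin (c K j : ℕ) (hj : j < K) : sin ((((4 * c + 1) * 25 ^ K : ℕ) : ℝ) * ph j) = 1 := by
  obtain ⟨b, hb⟩ := node K j hj
  have : (((4 * c + 1) * 25 ^ K : ℕ) : ℝ) * ph j = π / 2 + (c + (4 * c + 1) * b : ℕ) * (2 * π) := by
    rw [Nat.cast_mul, mul_assoc, hb]; push_cast; ring
  rw [this, sin_add_nat_mul_two_pi, sin_pi_div_two]

/-- kernel -/
def lam (K j : ℕ) (x : ℝ) : ℝ := (Lam (25 ^ K) (ph j)).eval x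

lemma lam_bound (K j : ℕ) (x : ℝ) (hx : x ∈ Ioo (-1:ℝ) 1) : |lam K j x| ≤ 3 := by
  have := Lam_bound (25 ^ K) (by positivity) (ph j) (arccos x)
  rwa [cos_arccos hx.1.le hx.2.le] at this

lemma lam_decay (K j : ℕ) (hj : j < K) (x : ℝ) (hx : x ∈ Ioo (-1:ℝ) 1) :
    |x - cos (ph j)| * |lam K j x| ≤ 2 * sg j / 25 ^ K := by
  have := Lam_decay (25 ^ K) (by positivity) (ph j) (arccos x) (node_cos K j hj)
  rw [cos_arccos hx.1.le hx.2.le] at this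
  refine this.trans ?_
  push_cast
  gcongr
  exact sin_ph_le j

lemma lam_self (K j : ℕ) (hj : j < K) : lam K j (cos (ph j)) = 1 :=
  Lam_self (25 ^ K) (by positivity) (ph j) (node_cos K j hj) (sin_ph_pos j).ne'

/-- bound for a single kernel -/
lemma Gd_lam (K j e s c : ℕ) (x : ℝ) (hx : x ∈ Ioo (-1:ℝ) 1) :
    |Gd ((4 * c + 1) * 25 ^ K) (RR (25 ^ K) (ph j) e s) (arccos x)|
      ≤ (3 * (4 * c + 1) + 2 * (e+1) + 6 * (s+1) * (4 * c + 1)) * 25 ^ K *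
        |lam K j x| ^ e * (1 - x ^ 2) ^ (s+1) := by
  have := Gd_RR_bound (25 ^ K) (by positivity) (ph j) e s ((4 * c + 1) * 25 ^ K) (arccos x)
  rw [cos_arccos hx.1.le hx.2.le] at this
  refine this.trans (le_of_eq ?_)
  unfold lam
  push_cast
  ring

lemma pow_le_aux (u α : ℝ) (s : ℕ) (hα : 0 ≤ α) (hs : α ≤ s) (h0 : 0 < u) (h2 : u ≤ 2) :
    u ^ s ≤ 2 ^ s * u ^ α := by
  have h1 : (1:ℝ) ≤ 2 ^ s := one_le_pow₀ (by norm_num)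
  rcases le_total u 1 with h | h
  · have : u ^ s ≤ u ^ α := by
      rw [← rpow_natCast]
      exact rpow_le_rpow_of_exponent_ge h0 h hs
    have h3 : 0 < u ^ α := rpow_pos_of_pos h0 _
    nlinarith
  · have h3 : 1 ≤ u ^ α := one_le_rpow h hα
    have h4 : u ^ s ≤ 2 ^ s := pow_le_pow_left₀ h0.le h2 s
    nlinarith

lemma sg_lower (K j : ℕ) (hj : j < K) : ((5:ℝ) ^ K)⁻¹ ≤ sg j := by
  unfold sg
  apply inv_anti₀ (by positivity)
  exact pow_le_pow_right₀ (by norm_num) (by omega)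

lemma term_far (α β η : ℝ) (hα : 0 ≤ α) (hβ : 0 ≤ β) (hη : 0 ≤ η) (s : ℕ) (hsα : α ≤ s) (hsβ : β ≤ s)
    (K j : ℕ) (hj : j < K) (x : ℝ) (hx : x ∈ Ioo (-1:ℝ) 1)
    (hfar : sg j ^ 2 / 4 < |x - cos (ph j)|) (C0 : ℝ) (hC0 : 0 ≤ C0) :
    (sg j ^ η / sg j ^ (2 * (s+1))) * (C0 * 25 ^ K * |lam K j x| ^ (2*s+5) * (1 - x ^ 2) ^ (s+1))
      * √(1 - x ^ 2)⁻¹ / jacobi α β x ≤ C0 * 8 ^ (2*s+5) * 4 ^ s * (5 ^ K)⁻¹ := by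
  have hσ := sg_pos j
  have hσ1 : sg j ≤ 1 := (sg_le j).trans (by norm_num)
  have hσK := sg_lower K j hj
  set T : ℝ := 5 ^ K with hT
  have hTpos : 0 < T := by positivity
  have h25 : (25:ℝ) ^ K = T ^ 2 := by rw [hT, ← pow_mul, mul_comm, pow_mul]; norm_num
  have hl : |lam K j x| ≤ 8 / T := by
    have h := lam_decay K j hj x hx
    rw [h25] at h
    have h1 : sg j ^ 2 / 4 * |lam K j x| ≤ 2 * sg j / T ^ 2 :=
      (mul_le_mul_of_nonneg_right hfar.le (abs_nonneg _)).trans h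
    have h3 : 1 ≤ sg j * T := by
      have := mul_le_mul_of_nonneg_right hσK hTpos.le
      rwa [inv_mul_cancel₀ hTpos.ne'] at this
    rw [le_div_iff₀ hTpos]
    rw [le_div_iff₀ (by positivity)] at h1
    have h4 : sg j * T * (|lam K j x| * T) ≤ 8 := by
      have : sg j * (sg j * T * (|lam K j x| * T)) ≤ sg j * 8 := by nlinarith
      exact le_of_mul_le_mul_left this hσ
    have h5 : 0 ≤ |lam K j x| * T := by positivity
    nlinarith
  have hy : 0 < 1 - x ^ 2 := by nlinarith [hx.1, hx.2]
  have hy1 : 1 - x ^ 2 ≤ 1 := by nlinarith [sq_nonneg x]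
  have hw := jacobi_pos α β x hx
  have hyw : (1 - x ^ 2) ^ (s+1) * √(1 - x ^ 2)⁻¹ ≤ 4 ^ s * jacobi α β x := by
    have h1 : (1 - x^2) * √(1 - x ^ 2)⁻¹ ≤ 1 := by
      rw [sqrt_inv, mul_inv_le_iff₀ (sqrt_pos.2 hy), one_mul]
      exact le_sqrt_of_sq_le (by nlinarith)
    have h2 : (1 - x^2) ^ s ≤ 4 ^ s * jacobi α β x := by
      have a1 := pow_le_aux (1 + x) α s hα hsα (by linarith [hx.1]) (by linarith [hx.2])
      have a2 := pow_le_aux (1 - x) β s hβ hsβ (by linarith [hx.2]) (by linarith [hx.1])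
      have p1 : 0 < 1 + x := by linarith [hx.1]
      have p2 : 0 < 1 - x := by linarith [hx.2]
      calc (1 - x^2) ^ s = (1 + x) ^ s * (1 - x) ^ s := by rw [← mul_pow]; ring
        _ ≤ (2 ^ s * (1 + x) ^ α) * (2 ^ s * (1 - x) ^ β) := by gcongr
        _ = (2 * 2) ^ s * jacobi α β x := by unfold jacobi; rw [mul_pow]; ring
        _ = _ := by norm_num
    calc (1 - x ^ 2) ^ (s+1) * √(1 - x ^ 2)⁻¹ = (1 - x^2)^s * ((1 - x^2) * √(1 - x ^ 2)⁻¹) := by ring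
      _ ≤ (1 - x^2)^s * 1 := by gcongr
      _ ≤ _ := by linarith
  have hb : sg j ^ η / sg j ^ (2 * (s+1)) ≤ T ^ (2 * (s+1)) := by
    have h1 : sg j ^ η ≤ 1 := rpow_le_one hσ.le hσ1 hη
    have h2 : (T⁻¹) ^ (2 * (s+1)) ≤ sg j ^ (2 * (s+1)) := by gcongr
    calc sg j ^ η / sg j ^ (2 * (s+1)) ≤ 1 / (T⁻¹) ^ (2 * (s+1)) := by gcongr
      _ = _ := by simp
  rw [div_le_iff₀ hw, h25]
  calc (sg j ^ η / sg j ^ (2 * (s+1))) * (C0 * T ^ 2 * |lam K j x| ^ (2*s+5) * (1 - x ^ 2) ^ (s+1))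
      * √(1 - x ^ 2)⁻¹
      = (sg j ^ η / sg j ^ (2 * (s+1))) * (C0 * T ^ 2 * |lam K j x| ^ (2*s+5)) *
        ((1 - x ^ 2) ^ (s+1) * √(1 - x ^ 2)⁻¹) := by ring
    _ ≤ T ^ (2 * (s+1)) * (C0 * T ^ 2 * (8 / T) ^ (2*s+5)) * (4 ^ s * jacobi α β x) := by gcongr
    _ = _ := by
      rw [div_pow]
      field_simp
      ring

lemma term_near (α β ι : ℝ) (hα : 0 ≤ α) (hβ : 0 ≤ β) (s e : ℕ)
    (K j : ℕ) (x : ℝ) (hx : x ∈ Ioo (-1:ℝ) 1)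
    (hnear : |x - cos (ph j)| ≤ sg j ^ 2 / 4) (C0 : ℝ) (hC0 : 0 ≤ C0) :
    (sg j ^ (2 * β + ι) / sg j ^ (2 * (s+1))) * (C0 * 25 ^ K * |lam K j x| ^ e * (1 - x ^ 2) ^ (s+1))
      * √(1 - x ^ 2)⁻¹ / jacobi α β x ≤
      (C0 * 3 ^ e * 3 ^ (s+1) * 2 * 4 ^ β) * 25 ^ K * sg j ^ (ι - 1) * (|lam K j x| / 3) ^ e := by
  have hσ := sg_pos j
  have hσ1 := sg_le j
  have hl := x_lower j
  have hu := x_upper j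
  rw [abs_le] at hnear
  have hτ : sg j ^ 2 ≤ 1 / 25 := by nlinarith
  have b1 : sg j ^ 2 / 4 ≤ 1 - x := by linarith [hnear.2]
  have b2 : 1 - x ≤ 3 / 2 * sg j ^ 2 := by linarith [hnear.1]
  have hx0 : 0 ≤ x := by linarith
  have y1 : sg j ^ 2 / 4 ≤ 1 - x ^ 2 := by nlinarith [hx.2]
  have y2 : 1 - x ^ 2 ≤ 3 * sg j ^ 2 := by nlinarith [hx.2]
  have hτ0 : 0 < sg j ^ 2 := by positivity
  have hy : 0 < 1 - x ^ 2 := by linarith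
  have hw := jacobi_pos α β x hx
  have hsq : √(1 - x ^ 2)⁻¹ ≤ 2 / sg j := by
    apply sqrt_le_iff.2
    refine ⟨by positivity, ?_⟩
    calc (1 - x^2)⁻¹ ≤ (sg j ^ 2 / 4)⁻¹ := inv_anti₀ (by positivity) y1
      _ = _ := by field_simp; norm_num
  have hwl : (sg j ^ 2 / 4) ^ β ≤ jacobi α β x := by
    unfold jacobi
    have h1 : 1 ≤ (1 + x) ^ α := one_le_rpow (by linarith) hα
    have h2 : (sg j ^ 2 / 4) ^ β ≤ (1 - x) ^ β := rpow_le_rpow (by positivity) b1 hβ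
    have h3 : 0 ≤ (sg j ^ 2 / 4) ^ β := by positivity
    nlinarith
  have hwe : (sg j ^ 2 / 4) ^ β = sg j ^ (2 * β) / 4 ^ β := by
    rw [div_rpow (by positivity) (by norm_num), ← rpow_natCast, ← rpow_mul hσ.le]
    norm_num
  rw [div_le_iff₀ hw]
  have hwl' := hwl
  rw [hwe] at hwl'
  have e1 : sg j ^ (2 * β + ι) = sg j ^ (2 * β) * (sg j ^ (ι - 1) * sg j) := by
    rw [← rpow_add_one hσ.ne', ← rpow_add hσ]; congr 1; ring
  calc _ ≤ (sg j ^ (2 * β + ι) / sg j ^ (2 * (s+1))) *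
        (C0 * 25 ^ K * |lam K j x| ^ e * (3 * sg j ^ 2) ^ (s+1)) * (2 / sg j) := by gcongr
    _ = ((C0 * 3 ^ e * 3 ^ (s+1) * 2 * 4 ^ β) * 25 ^ K * sg j ^ (ι - 1) * (|lam K j x| / 3) ^ e) *
        (sg j ^ (2 * β) / 4 ^ β) := by
      rw [e1, div_pow, mul_pow, ← pow_mul]
      have : (0:ℝ) < 4 ^ β := by positivity
      field_simp
    _ ≤ _ := by gcongr

end S8


namespace S8

open Real Polynomial

def bq (β ι : ℝ) (s j : ℕ) : ℝ := sg j ^ (2 * β + ι) / sg j ^ (2 * (s+1))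

lemma bq_pos (β ι : ℝ) (s j : ℕ) : 0 < bq β ι s j := by
  have := sg_pos j
  unfold bq; positivity

def RT (β ι : ℝ) (s K : ℕ) : ℝ[X] :=
  ∑ j ∈ Finset.range K, Polynomial.C (bq β ι s j) * RR (25 ^ K) (ph j) (2*s+5) s

def nearB (B : ℝ) (e : ℕ) (ι : ℝ) (K j : ℕ) (x : ℝ) : ℝ :=
  if |x - cos (ph j)| ≤ sg j ^ 2 / 4 then B * 25 ^ K * sg j ^ (ι - 1) * (|lam K j x| / 3) ^ e else 0

lemma V_point (α β ι : ℝ) (hα : 0 ≤ α) (hβ : 0 ≤ β) (hι : 0 ≤ ι) (s c : ℕ)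
    (hsα : α ≤ s) (hsβ : β ≤ s) :
    ∃ C1 C2 : ℝ, 0 < C1 ∧ 0 < C2 ∧ ∀ K : ℕ, ∀ x ∈ Ioo (-1:ℝ) 1,
      |Gd ((4 * c + 1) * 25 ^ K) (RT β ι s K) (arccos x)| * √(1 - x ^ 2)⁻¹ / jacobi α β x
        ≤ ∑ j ∈ Finset.range K, nearB C1 (2*s+5) ι K j x + C2 := by
  set C0 : ℝ := 3 * (4 * c + 1) + 2 * ((2*s+5:ℕ)+1) + 6 * (s+1) * (4 * c + 1) with hC0
  have hC0p : 0 < C0 := by positivity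
  refine ⟨C0 * 3 ^ (2*s+5) * 3 ^ (s+1) * 2 * 4 ^ β, C0 * 8 ^ (2*s+5) * 4 ^ s, by positivity,
    by positivity, ?_⟩
  intro K x hx
  have hw := jacobi_pos α β x hx
  have step : ∀ j ∈ Finset.range K,
      bq β ι s j * |Gd ((4 * c + 1) * 25 ^ K) (RR (25 ^ K) (ph j) (2*s+5) s) (arccos x)|
        * √(1 - x ^ 2)⁻¹ / jacobi α β x
      ≤ nearB (C0 * 3 ^ (2*s+5) * 3 ^ (s+1) * 2 * 4 ^ β) (2*s+5) ι K j x
        + C0 * 8 ^ (2*s+5) * 4 ^ s * (5 ^ K)⁻¹ := by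
    intro j hj
    have hj' := Finset.mem_range.1 hj
    have h1 := Gd_lam K j (2*s+5) s c x hx
    rw [← hC0] at h1
    have hb := bq_pos β ι s j
    have h2 : bq β ι s j * |Gd ((4 * c + 1) * 25 ^ K) (RR (25 ^ K) (ph j) (2*s+5) s) (arccos x)|
        * √(1 - x ^ 2)⁻¹ / jacobi α β x
        ≤ bq β ι s j * (C0 * 25 ^ K * |lam K j x| ^ (2*s+5) * (1 - x ^ 2) ^ (s+1))
      * √(1 - x ^ 2)⁻¹ / jacobi α β x := by gcongr
    refine h2.trans ?_
    unfold bq nearB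
    split_ifs with hn
    · have := term_near α β ι hα hβ s (2*s+5) K j x hx hn C0 hC0p.le
      have h3 : 0 ≤ C0 * 8 ^ (2*s+5) * 4 ^ s * (5 ^ K)⁻¹ := by positivity
      linarith
    · have := term_far α β (2*β+ι) hα hβ (by positivity) s hsα hsβ K j hj' x hx (not_le.1 hn) C0 hC0p.le
      linarith
  have h4 : |Gd ((4 * c + 1) * 25 ^ K) (RT β ι s K) (arccos x)| * √(1 - x ^ 2)⁻¹ / jacobi α β x
      ≤ ∑ j ∈ Finset.range K, bq β ι s j *
        |Gd ((4 * c + 1) * 25 ^ K) (RR (25 ^ K) (ph j) (2*s+5) s) (arccos x)|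
        * √(1 - x ^ 2)⁻¹ / jacobi α β x := by
    unfold RT
    rw [Gd_sum, ← Finset.sum_div, ← Finset.sum_mul]
    gcongr
    refine (Finset.abs_sum_le_sum_abs _ _).trans (le_of_eq ?_)
    refine Finset.sum_congr rfl (fun j _ => ?_)
    rw [abs_mul, abs_of_pos (bq_pos β ι s j)]
  refine h4.trans ((Finset.sum_le_sum step).trans ?_)
  rw [Finset.sum_add_distrib]
  gcongr
  simp only [Finset.sum_const, Finset.card_range, nsmul_eq_mul]
  have hK : (K:ℝ) ≤ 5 ^ K := by exact_mod_cast (Nat.lt_pow_self (by norm_num : 1 < 5)).le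
  have h5 : (K:ℝ) * (5 ^ K)⁻¹ ≤ 1 := by
    rw [mul_inv_le_iff₀ (by positivity)]; linarith
  calc (K:ℝ) * (C0 * 8 ^ (2*s+5) * 4 ^ s * (5 ^ K)⁻¹) = (C0 * 8 ^ (2*s+5) * 4 ^ s) * (K * (5 ^ K)⁻¹) := by ring
    _ ≤ (C0 * 8 ^ (2*s+5) * 4 ^ s) * 1 := by gcongr
    _ = _ := by ring

lemma sg_anti {i j : ℕ} (h : i < j) : sg j ≤ sg i / 5 := by
  unfold sg
  rw [div_eq_mul_inv, ← mul_inv]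
  apply inv_anti₀ (by positivity)
  rw [← pow_succ]
  exact pow_le_pow_right₀ (by norm_num) (by omega)

lemma near_disj {i j : ℕ} (h : i < j) (x : ℝ) (hi : |x - cos (ph i)| ≤ sg i ^ 2 / 4)
    (hj : |x - cos (ph j)| ≤ sg j ^ 2 / 4) : False := by
  have h1 := sg_anti h
  have h2 := sg_pos i
  have h3 := sg_pos j
  have a1 := x_lower i
  have a2 := x_upper j
  rw [abs_le] at hi hj
  have : sg j ^ 2 ≤ (sg i / 5) ^ 2 := by gcongr
  have h4 : 0 < sg i ^ 2 := by positivity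
  nlinarith [hi.1, hi.2, hj.1, hj.2]

lemma sum_rpow_le (K : ℕ) (b : ℕ → ℝ) (hb : ∀ j, 0 ≤ b j) (r : ℝ) (hr : 0 < r)
    (hd : ∀ i ∈ Finset.range K, ∀ j ∈ Finset.range K, b i ≠ 0 → b j ≠ 0 → i = j) :
    (∑ j ∈ Finset.range K, b j) ^ r ≤ ∑ j ∈ Finset.range K, b j ^ r := by
  by_cases h : ∃ i ∈ Finset.range K, b i ≠ 0
  · obtain ⟨i, hi, hbi⟩ := h
    rw [Finset.sum_eq_single_of_mem i hi]
    · exact Finset.single_le_sum (f := fun j => b j ^ r) (fun j _ => rpow_nonneg (hb j) r) hi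
    · intro j hj hji
      by_contra hbj
      exact hji (hd j hj i hi hbj hbi)
  · push Not at h
    rw [Finset.sum_eq_zero h, zero_rpow hr.ne']
    exact Finset.sum_nonneg (fun j _ => rpow_nonneg (hb j) r)

lemma nearB_nonneg (B : ℝ) (hB : 0 ≤ B) (e : ℕ) (ι : ℝ) (K j : ℕ) (x : ℝ) : 0 ≤ nearB B e ι K j x := by
  unfold nearB
  have := sg_pos j
  split_ifs <;> positivity

def kap (K j : ℕ) (x : ℝ) : ℝ := (1 + ((x - cos (ph j)) / (sg j / 25 ^ K)) ^ 2)⁻¹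

lemma lam_kap (K j : ℕ) (hj : j < K) (x : ℝ) (hx : x ∈ Ioo (-1:ℝ) 1) :
    (|lam K j x| / 3) ^ 2 ≤ 2 * kap K j x := by
  have h1 := lam_bound K j x hx
  have h2 := lam_decay K j hj x hx
  have hσ := sg_pos j
  set δ := sg j / 25 ^ K with hδ
  have hδp : 0 < δ := by positivity
  have h2' : |x - cos (ph j)| * |lam K j x| ≤ 2 * δ := by rw [hδ]; rw [mul_div_assoc] at h2; exact h2
  unfold kap
  rw [← hδ]
  set l := |lam K j x| with hl
  have hl0 : 0 ≤ l := abs_nonneg _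
  rw [div_pow, div_pow, ← div_eq_mul_inv, le_div_iff₀ (by positivity)]
  have h3 : ((x - cos (ph j)) ^ 2) * l ^ 2 ≤ 4 * δ ^ 2 := by
    rw [← sq_abs (x - cos (ph j)), ← mul_pow]
    calc _ ≤ (2 * δ) ^ 2 := by gcongr
      _ = _ := by ring
  have h4 : (x - cos (ph j)) ^ 2 / δ ^ 2 * l ^ 2 ≤ 4 := by
    rw [div_mul_eq_mul_div, div_le_iff₀ (by positivity)]; exact h3
  nlinarith

lemma nearB_rpow (B : ℝ) (hB : 0 ≤ B) (e : ℕ) (he : 2 ≤ e) (ι r : ℝ) (hr : 1 ≤ r) (hrι : (ι - 1) * r = -1)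
    (K j : ℕ) (hj : j < K) (x : ℝ) (hx : x ∈ Ioo (-1:ℝ) 1) :
    nearB B e ι K j x ^ r ≤ B ^ r * (25 ^ K) ^ r * (sg j)⁻¹ * (2 * kap K j x) := by
  have hσ := sg_pos j
  have hk : 0 < kap K j x := by unfold kap; positivity
  unfold nearB
  split_ifs with h
  · rw [mul_rpow (by positivity) (by positivity), mul_rpow (by positivity) (by positivity),
      mul_rpow hB (by positivity), ← rpow_mul hσ.le, hrι, rpow_neg_one]
    gcongr
    refine le_trans ?_ (lam_kap K j hj x hx)
    have h0 : 0 ≤ |lam K j x| / 3 := by positivity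
    have h1 : |lam K j x| / 3 ≤ 1 := by linarith [lam_bound K j x hx]
    have h2 : (|lam K j x| / 3) ^ e ≤ (|lam K j x| / 3) ^ 2 := pow_le_pow_of_le_one h0 h1 he
    have h3 : (|lam K j x| / 3) ^ e ≤ 1 := pow_le_one₀ h0 h1
    refine le_trans ?_ h2
    rcases h0.eq_or_lt with h0' | h0'
    · rw [← h0', zero_pow (by omega), zero_rpow (by positivity)]
    · calc _ ≤ ((|lam K j x| / 3) ^ e) ^ (1:ℝ) :=
          rpow_le_rpow_of_exponent_ge (by positivity) h3 hr
        _ = _ := rpow_one _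
  · rw [zero_rpow (by positivity)]
    positivity

lemma add_rpow_le' (a b r : ℝ) (ha : 0 ≤ a) (hb : 0 ≤ b) (hr : 0 ≤ r) :
    (a + b) ^ r ≤ 2 ^ r * (a ^ r + b ^ r) := by
  have h1 : a + b ≤ 2 * max a b := by
    rcases le_total a b with h | h <;> simp [h] <;> linarith
  calc (a+b)^r ≤ (2 * max a b)^r := rpow_le_rpow (by positivity) h1 hr
    _ = 2 ^ r * (max a b) ^ r := mul_rpow (by norm_num) (by positivity)
    _ ≤ _ := by
      gcongr
      have := rpow_nonneg ha r
      have := rpow_nonneg hb r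
      rcases le_total a b with h | h <;> simp [h] <;> linarith

lemma lint_kap (K j : ℕ) : ∫⁻ x, ENNReal.ofReal (kap K j x) = ENNReal.ofReal (π * (sg j / 25 ^ K)) := by
  have hσ := sg_pos j
  have hδ : 0 < sg j / 25 ^ K := by positivity
  have hint : Integrable (fun x => kap K j x) := by
    unfold kap
    exact (integrable_inv_one_add_sq.comp_div hδ.ne').comp_sub_right (cos (ph j))
  rw [← ofReal_integral_eq_lintegral_ofReal hint (Eventually.of_forall (fun x => by
    simp only [kap, Pi.zero_apply]; positivity))]
  congr 1
  unfold kap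
  rw [integral_sub_right_eq_self (fun y => (1 + (y / (sg j / 25 ^ K)) ^ 2)⁻¹) (cos (ph j)),
    Measure.integral_comp_div (fun y => (1 + y ^ 2)⁻¹), integral_univ_inv_one_add_sq,
    abs_of_pos hδ, smul_eq_mul, mul_comm]

lemma V_int (α β ι r : ℝ) (hα : 0 ≤ α) (hβ : 0 ≤ β) (hι : 0 ≤ ι) (hr : 1 ≤ r)
    (hrι : (ι - 1) * r = -1) (s c : ℕ) (hsα : α ≤ s) (hsβ : β ≤ s) :
    ∃ C : ℝ, 0 < C ∧ ∀ K : ℕ, 1 ≤ K →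
      (∫⁻ x in Ioo (-1:ℝ) 1,
          ENNReal.ofReal (|Gd ((4 * c + 1) * 25 ^ K) (RT β ι s K) (arccos x)| * √(1 - x ^ 2)⁻¹
            / jacobi α β x) ^ r) ≤ ENNReal.ofReal (C * (K * (25 ^ K) ^ (r - 1))) := by
  obtain ⟨C1, C2, hC1, hC2, hV⟩ := V_point α β ι hα hβ hι s c hsα hsβ
  refine ⟨2 ^ r * (C1 ^ r * (2 * π) + 2 * C2 ^ r), by positivity, ?_⟩
  intro K hK
  have key : ∀ x ∈ Ioo (-1:ℝ) 1,
      ENNReal.ofReal (|Gd ((4 * c + 1) * 25 ^ K) (RT β ι s K) (arccos x)| * √(1 - x ^ 2)⁻¹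
            / jacobi α β x) ^ r ≤
      (∑ j ∈ Finset.range K, ENNReal.ofReal (2 ^ r * (C1 ^ r * (25 ^ K) ^ r * (sg j)⁻¹ * 2))
          * ENNReal.ofReal (kap K j x))
        + ENNReal.ofReal (2 ^ r * C2 ^ r) := by
    intro x hx
    have hw := jacobi_pos α β x hx
    have hk : ∀ j, 0 < kap K j x := fun j => by unfold kap; positivity
    rw [ENNReal.ofReal_rpow_of_nonneg (by positivity) (by positivity)]
    have e : (∑ j ∈ Finset.range K, ENNReal.ofReal (2 ^ r * (C1 ^ r * (25 ^ K) ^ r * (sg j)⁻¹ * 2))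
          * ENNReal.ofReal (kap K j x)) + ENNReal.ofReal (2 ^ r * C2 ^ r)
        = ENNReal.ofReal ((∑ j ∈ Finset.range K, (2 ^ r * (C1 ^ r * (25 ^ K) ^ r * (sg j)⁻¹ * 2))
          * kap K j x) + 2 ^ r * C2 ^ r) := by
      have hnn : ∀ j, 0 ≤ (2 ^ r * (C1 ^ r * (25 ^ K) ^ r * (sg j)⁻¹ * 2)) * kap K j x := by
        intro j
        have := hk j
        have := sg_pos j
        positivity
      rw [ENNReal.ofReal_add (Finset.sum_nonneg (fun j _ => hnn j)) (by positivity),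
        ENNReal.ofReal_sum_of_nonneg (fun j _ => hnn j)]
      congr 1
      refine Finset.sum_congr rfl (fun j _ => ?_)
      have := sg_pos j
      exact (ENNReal.ofReal_mul (by positivity)).symm
    rw [e]
    apply ENNReal.ofReal_le_ofReal
    have hS : 0 ≤ ∑ j ∈ Finset.range K, nearB C1 (2*s+5) ι K j x :=
      Finset.sum_nonneg (fun j _ => nearB_nonneg C1 hC1.le _ _ _ _ _)
    refine (rpow_le_rpow (by positivity) (hV K x hx) (by positivity)).trans ?_
    refine (add_rpow_le' _ _ r hS hC2.le (by positivity)).trans ?_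
    have h1 := sum_rpow_le K (fun j => nearB C1 (2*s+5) ι K j x)
      (fun j => nearB_nonneg C1 hC1.le _ _ _ _ _) r (by positivity) (by
        intro i _ j _ h1 h2
        have hi : |x - cos (ph i)| ≤ sg i ^ 2 / 4 := by
          by_contra h; exact h1 (by simp [nearB, h])
        have hj : |x - cos (ph j)| ≤ sg j ^ 2 / 4 := by
          by_contra h; exact h2 (by simp [nearB, h])
        rcases lt_trichotomy i j with h | h | h
        · exact (near_disj h x hi hj).elim
        · exact h
        · exact (near_disj h x hj hi).elim)
    have h2 : ∑ j ∈ Finset.range K, nearB C1 (2*s+5) ι K j x ^ r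
        ≤ ∑ j ∈ Finset.range K, C1 ^ r * (25 ^ K) ^ r * (sg j)⁻¹ * (2 * kap K j x) :=
      Finset.sum_le_sum (fun j hj => nearB_rpow C1 hC1.le _ (by omega) ι r hr hrι K j
        (Finset.mem_range.1 hj) x hx)
    rw [mul_add]
    gcongr
    refine (mul_le_mul_of_nonneg_left (h1.trans h2) (by positivity)).trans (le_of_eq ?_)
    rw [Finset.mul_sum]
    exact Finset.sum_congr rfl (fun j _ => by ring)
  refine (setLIntegral_mono' measurableSet_Ioo key).trans ?_
  have mk : ∀ j, Measurable (fun x => ENNReal.ofReal (kap K j x)) := by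
    intro j; unfold kap; fun_prop
  rw [lintegral_add_right _ measurable_const, lintegral_const,
    lintegral_finsetSum _ (fun j _ => (mk j).const_mul _)]
  have h1 : ∀ j ∈ Finset.range K, ∫⁻ x in Ioo (-1:ℝ) 1,
      ENNReal.ofReal (2 ^ r * (C1 ^ r * (25 ^ K) ^ r * (sg j)⁻¹ * 2)) * ENNReal.ofReal (kap K j x)
      ≤ ENNReal.ofReal (2 ^ r * (C1 ^ r * (2 * π)) * (25 ^ K) ^ (r - 1)) := by
    intro j _
    have hσ := sg_pos j
    rw [lintegral_const_mul _ (mk j)]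
    refine (mul_le_mul_right (setLIntegral_le_lintegral _ _) _).trans ?_
    rw [lint_kap, ← ENNReal.ofReal_mul (by positivity)]
    apply ENNReal.ofReal_le_ofReal (le_of_eq _)
    rw [rpow_sub_one (by positivity)]
    field_simp
  refine (add_le_add (Finset.sum_le_sum h1) le_rfl).trans ?_
  rw [Finset.sum_const, Finset.card_range, nsmul_eq_mul, Measure.restrict_apply MeasurableSet.univ,
    univ_inter, Real.volume_Ioo, ← ENNReal.ofReal_natCast, ← ENNReal.ofReal_mul (by positivity),
    ← ENNReal.ofReal_mul (by positivity), ← ENNReal.ofReal_add (by positivity) (by positivity)]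
  apply ENNReal.ofReal_le_ofReal
  have hK1 : (1:ℝ) ≤ K := by exact_mod_cast hK
  have hM1 : (1:ℝ) ≤ (25 ^ K) ^ (r - 1) := one_le_rpow (one_le_pow₀ (by norm_num)) (by linarith)
  have hKM : (1:ℝ) ≤ K * (25 ^ K) ^ (r - 1) := one_le_mul_of_one_le_of_one_le hK1 hM1
  have hp : 0 ≤ 2 ^ r * C2 ^ r := by positivity
  nlinarith

end S8


namespace S8

open Real Polynomial

lemma RT_deg (β ι : ℝ) (s K : ℕ) : (RT β ι s K).natDegree ≤ (2*s+6) * 25 ^ K + 2 * (s+1) := by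
  unfold RT
  apply natDegree_sum_le_of_forall_le
  intro j _
  refine (natDegree_C_mul_le _ _).trans ?_
  exact RR_deg _ _ _ _

def hq (β ι : ℝ) (j : ℕ) : ℝ := (sg j ^ (2 * β + ι))⁻¹

lemma hq_pos (β ι : ℝ) (j : ℕ) : 0 < hq β ι j := by
  have := sg_pos j
  unfold hq; positivity

lemma cos_ph_nonneg (j : ℕ) : 0 ≤ cos (ph j) := by
  have h1 := x_upper j
  have h2 := sg_le j
  have h3 := sg_pos j
  nlinarith

lemma pair_lower (β ι : ℝ) (s c K : ℕ) :
    (K:ℝ) * (1/2) ^ (s+1) ≤ ∑ j ∈ Finset.range K, hq β ι j *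
      (sin ((((4*c+1)*25^K : ℕ) : ℝ) * ph j) * (RT β ι s K).eval (cos (ph j))) := by
  have key : ∀ j ∈ Finset.range K, ((1:ℝ)/2) ^ (s+1) ≤ hq β ι j *
      (sin ((((4*c+1)*25^K : ℕ) : ℝ) * ph j) * (RT β ι s K).eval (cos (ph j))) := by
    intro j hj
    have hjK := Finset.mem_range.1 hj
    rw [node_sin c K j hjK, one_mul]
    have hσ := sg_pos j
    have hx2 : (cos (ph j)) ^ 2 ≤ 1 := cos_sq_le_one _
    have hlow : bq β ι s j * (sg j ^ 2 / 2) ^ (s+1) ≤ (RT β ι s K).eval (cos (ph j)) := by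
      unfold RT
      rw [eval_finsetSum]
      have h1 : bq β ι s j * (sg j ^ 2 / 2) ^ (s+1) ≤
          (Polynomial.C (bq β ι s j) * RR (25 ^ K) (ph j) (2*s+5) s).eval (cos (ph j)) := by
        rw [eval_mul, eval_C, RR_eval]
        have := lam_self K j hjK
        unfold lam at this
        rw [this, one_pow, one_mul]
        have hb := bq_pos β ι s j
        gcongr
        have := x_lower j
        have h0 := cos_ph_nonneg j
        have := cos_le_one (ph j)
        nlinarith
      refine h1.trans (Finset.single_le_sum (f := fun i => (Polynomial.C (bq β ι s i) * RR (25 ^ K) (ph i) (2*s+5) s).eval (cos (ph j))) ?_ hj)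
      intro i _
      simp only [eval_mul, eval_C, RR_eval]
      have hb := bq_pos β ι s i
      have : 0 ≤ (Lam (25^K) (ph i)).eval (cos (ph j)) ^ (2*s+5+1) := by
        apply Even.pow_nonneg; exact ⟨s+3, by ring⟩
      have : 0 ≤ 1 - cos (ph j) ^ 2 := by linarith
      positivity
    refine le_trans (le_of_eq ?_) (mul_le_mul_of_nonneg_left hlow (hq_pos β ι j).le)
    unfold hq bq
    have : 0 < sg j ^ (2 * β + ι) := by positivity
    rw [div_pow, div_pow, ← pow_mul, one_pow]
    field_simp
  calc (K:ℝ) * (1/2) ^ (s+1) = ∑ j ∈ Finset.range K, ((1:ℝ)/2) ^ (s+1) := by simp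
    _ ≤ _ := Finset.sum_le_sum key

lemma err_lower (q : ℝ≥0∞) (hq1 : 1 < q) (hq2 : q ≠ ∞) (α β : ℝ) (hα : 0 ≤ α) (hβ : 0 ≤ β) :
    ∃ c > 0, ∀ K : ℕ, 1 ≤ K → ∀ P : ℝ[X], P.natDegree ≤ 25 ^ K →
      ENNReal.ofReal (c * ((K:ℝ) ^ (1 / q.toReal) * ((25:ℝ) ^ K) ^ (-(1 / q.toReal)))) ≤
      LpOn (fun x => jacobi α β x * (stepF K (hq β (1 / q.toReal)) ph x - P.eval x)) q (-1) 1 := by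
  obtain ⟨s, hs⟩ := exists_nat_ge (max α β)
  have hsα : α ≤ s := (le_max_left _ _).trans hs
  have hsβ : β ≤ s := (le_max_right _ _).trans hs
  have hp1 : 1 < q.toReal := by
    have := (ENNReal.toReal_lt_toReal ENNReal.one_ne_top hq2).2 hq1
    simpa using this
  set p := q.toReal with hp
  have hpp := Real.HolderConjugate.conjExponent hp1
  set p' := Real.conjExponent p with hp'
  have hp0 : 0 < p := hpp.pos
  have hp'0 : 0 < p' := hpp.symm.pos
  have hinv : 1 / p + 1 / p' = 1 := by
    have := hpp.inv_add_inv_eq_one; simpa [one_div] using this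
  have hrι : (1 / p - 1) * p' = -1 := by
    have : 1 / p - 1 = - (1/p') := by linarith
    rw [this]; field_simp
  obtain ⟨C, hC, hV⟩ := V_int α β (1/p) p' hα hβ (by positivity) hpp.symm.lt.le hrι s (3*s+10) hsα hsβ
  refine ⟨(1/2) ^ (s+1) / C ^ (1/p'), by positivity, fun K hK P hP => ?_⟩
  have hM : 1 ≤ 25 ^ K := Nat.one_le_pow _ _ (by norm_num)
  have hd : P.natDegree + (RT β (1/p) s K).natDegree + 1 < (4*(3*s+10)+1) * 25 ^ K := by
    have := RT_deg β (1/p) s K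
    generalize 25 ^ K = M at *
    nlinarith
  have D := duality q hq1 hq2 p' hpp α β K (hq β (1/p)) ph (fun j => (ph_pos j).le) ph_le_pi
    ((4*(3*s+10)+1) * 25 ^ K) P (RT β (1/p) s K) hd
  have hKr : (0:ℝ) < K := by exact_mod_cast hK
  have D2 : ENNReal.ofReal ((K:ℝ) * (1/2) ^ (s+1)) ≤
      LpOn (fun x => jacobi α β x * (stepF K (hq β (1 / p)) ph x - P.eval x)) q (-1) 1 *
        ENNReal.ofReal ((C * (K * (25 ^ K) ^ (p' - 1))) ^ (1/p')) := by
    refine (ENNReal.ofReal_le_ofReal (pair_lower β (1/p) s (3*s+10) K)).trans (D.trans ?_)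
    rw [← ENNReal.ofReal_rpow_of_nonneg (by positivity) (by positivity)]
    gcongr
    exact hV K hK
  have hT : 0 < (C * (K * (25 ^ K) ^ (p' - 1))) ^ (1/p') := by positivity
  have e : (1/2) ^ (s+1) / C ^ (1/p') * ((K:ℝ) ^ (1 / p) * ((25:ℝ) ^ K) ^ (-(1 / p)))
     = (K:ℝ) * (1/2) ^ (s+1) / (C * (K * (25 ^ K) ^ (p' - 1))) ^ (1/p') := by
    rw [mul_rpow (by positivity) (by positivity), mul_rpow (by positivity) (by positivity),
      ← rpow_mul (by positivity)]
    have e1 : (p' - 1) * (1/p') = 1/p := by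
      have : 1 / p = 1 - 1/p' := by linarith
      rw [this]; field_simp
    have e2 : (K:ℝ) ^ (1/p) * (K:ℝ) ^ (1/p') = K := by
      rw [← rpow_add hKr, hinv, rpow_one]
    rw [e1, rpow_neg (by positivity), div_mul_eq_mul_div, div_eq_div_iff (by positivity) (by positivity)]
    have : ((25:ℝ)^K) ^ (1/p) ≠ 0 := by positivity
    calc _ = (1/2) ^ (s+1) * C ^ (1/p') * ((K:ℝ) ^ (1/p) * (K:ℝ) ^ (1/p')) * ((((25:ℝ)^K) ^ (1/p))⁻¹ * ((25:ℝ)^K) ^ (1/p)) := by ring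
      _ = _ := by rw [e2, inv_mul_cancel₀ this]; ring
  rw [e, ENNReal.ofReal_div_of_pos hT]
  exact ENNReal.div_le_of_le_mul D2

end S8


namespace S8

open Real Polynomial

lemma hq_succ (β ι : ℝ) (j : ℕ) : hq β ι (j+1) = 5 ^ (2*β+ι) * hq β ι j := by
  unfold hq
  have h : sg j = 5 * sg (j+1) := by
    unfold sg; rw [pow_succ 5 (j+1)]; field_simp
  have := sg_pos (j+1)
  rw [h, mul_rpow (by norm_num) this.le, mul_inv, ← mul_assoc, mul_inv_cancel₀ (by positivity), one_mul]

lemma hq_sum (β ι : ℝ) (hβ : 0 ≤ β) (hι : 0 < ι) : ∃ D > 0, ∀ n,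
    ∑ j ∈ Finset.range (n+1), hq β ι j ≤ D * hq β ι n := by
  set l : ℝ := 5 ^ (2*β+ι) with hl
  have hl1 : 1 < l := one_lt_rpow (by norm_num) (by positivity)
  have hl0 : 0 < l - 1 := by linarith
  refine ⟨l / (l-1), by positivity, fun n => ?_⟩
  have hD : l / (l-1) * l = l / (l-1) + l := by field_simp; ring
  induction n with
  | zero =>
    have := hq_pos β ι 0
    have h1 : 1 ≤ l / (l-1) := by rw [le_div_iff₀ hl0]; linarith
    simp only [zero_add, Finset.range_one, Finset.sum_singleton]
    nlinarith
  | succ n ih =>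
    rw [Finset.sum_range_succ, hq_succ, ← hl, ← mul_assoc, hD]
    linarith

lemma wf_point (p α β : ℝ) (hp : 0 < p) (hα : 0 ≤ α) (hβ : 0 ≤ β) : ∃ C > 0, ∀ K : ℕ, ∀ x ∈ Ioo (-1:ℝ) 1,
    |jacobi α β x * stepF K (hq β (1/p)) ph x| ^ (2*p) ≤
      ∑ j ∈ Finset.range K, C * (sg j ^ 2)⁻¹ * (if cos (ph j) ≤ x then 1 else 0) := by
  obtain ⟨D, hD, hsum⟩ := hq_sum β (1/p) hβ (by positivity)
  refine ⟨(2 ^ α * (5/4) ^ β * D) ^ (2*p), by positivity, fun K x hx => ?_⟩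
  set S := (Finset.range K).filter (fun j => cos (ph j) ≤ x) with hS
  have hf : stepF K (hq β (1/p)) ph x = ∑ j ∈ S, hq β (1/p) j := by
    unfold stepF
    rw [hS, Finset.sum_filter]
    refine Finset.sum_congr rfl (fun j _ => ?_)
    by_cases h : cos (ph j) ≤ x <;> simp [h]
  have hnn : ∀ j, 0 ≤ (2 ^ α * (5/4) ^ β * D) ^ (2*p) * (sg j ^ 2)⁻¹ * (if cos (ph j) ≤ x then (1:ℝ) else 0) := by
    intro j
    have := sg_pos j
    split_ifs <;> positivity
  rcases S.eq_empty_or_nonempty with h0 | h0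
  · rw [hf, h0, Finset.sum_empty, mul_zero, abs_zero, zero_rpow (by positivity)]
    exact Finset.sum_nonneg (fun j _ => hnn j)
  · set n := S.max' h0 with hn
    have hnS : n ∈ S := S.max'_mem h0
    rw [hS, Finset.mem_filter] at hnS
    have hσ := sg_pos n
    refine le_trans ?_ (Finset.single_le_sum (fun j _ => hnn j) hnS.1)
    rw [if_pos hnS.2, mul_one]
    have h1 : stepF K (hq β (1/p)) ph x ≤ D * hq β (1/p) n := by
      rw [hf]
      refine le_trans (Finset.sum_le_sum_of_subset_of_nonneg ?_ (fun j _ _ => (hq_pos _ _ j).le)) (hsum n)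
      intro j hj
      exact Finset.mem_range.2 (Nat.lt_succ_of_le (S.le_max' j hj))
    have h1' : 0 ≤ stepF K (hq β (1/p)) ph x := by
      rw [hf]; exact Finset.sum_nonneg (fun j _ => (hq_pos _ _ j).le)
    have hw0 := (jacobi_pos α β x hx).le
    have hw : jacobi α β x ≤ 2 ^ α * ((5/4) ^ β * sg n ^ (2*β)) := by
      unfold jacobi
      have hx1 := hx.1
      have hx2 := hx.2
      have a1 : (1+x) ^ α ≤ 2 ^ α := rpow_le_rpow (by linarith) (by linarith) hα
      have a2 : (1-x) ^ β ≤ (5/4) ^ β * sg n ^ (2*β) := by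
        rw [rpow_mul hσ.le, rpow_two, ← mul_rpow (by norm_num) (by positivity)]
        exact rpow_le_rpow (by linarith) (by linarith [x_upper n, hnS.2]) hβ
      exact mul_le_mul a1 a2 (rpow_nonneg (by linarith) _) (by positivity)
    have h2 : |jacobi α β x * stepF K (hq β (1/p)) ph x| ≤ (2 ^ α * (5/4) ^ β * D) * sg n ^ (-(1/p)) := by
      rw [abs_of_nonneg (mul_nonneg hw0 h1')]
      refine (mul_le_mul hw h1 h1' (by positivity)).trans (le_of_eq ?_)
      unfold hq
      rw [rpow_add hσ, rpow_neg hσ.le]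
      have : sg n ^ (2*β) ≠ 0 := by positivity
      field_simp
    refine (rpow_le_rpow (abs_nonneg _) h2 (by positivity)).trans (le_of_eq ?_)
    rw [mul_rpow (by positivity) (by positivity), ← rpow_mul hσ.le]
    have : -(1/p) * (2*p) = -(2:ℝ) := by field_simp
    rw [this, rpow_neg hσ.le, rpow_two]

lemma wf_norm (q : ℝ≥0∞) (hq1 : 1 < q) (hq2 : q ≠ ∞) (α β : ℝ) (hα : 0 ≤ α) (hβ : 0 ≤ β) :
    ∃ C > 0, ∀ K : ℕ,
      LpOn (fun x => jacobi α β x * stepF K (hq β (1 / q.toReal)) ph x) (2*q) (-1) 1 ≤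
        ENNReal.ofReal ((C * K) ^ (1 / (2 * q.toReal))) := by
  have hp1 : 1 < q.toReal := by
    have := (ENNReal.toReal_lt_toReal ENNReal.one_ne_top hq2).2 hq1
    simpa using this
  set p := q.toReal with hp
  have hp0 : 0 < p := by linarith
  obtain ⟨C, hC, hpt⟩ := wf_point p α β hp0 hα hβ
  refine ⟨C * (5/4), by positivity, fun K => ?_⟩
  have h2q0 : 2 * q ≠ 0 := by
    refine mul_ne_zero (by norm_num) (by rintro rfl; simp at hq1)
  have h2qt : 2 * q ≠ ∞ := ENNReal.mul_ne_top (by norm_num) hq2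
  have h2q : (2*q).toReal = 2 * p := by rw [ENNReal.toReal_mul]; simp [hp]
  unfold LpOn
  rw [eLpNorm_eq_lintegral_rpow_enorm_toReal h2q0 h2qt, h2q,
    ← ENNReal.ofReal_rpow_of_nonneg (by positivity) (by positivity)]
  apply ENNReal.rpow_le_rpow _ (by positivity)
  rw [← restrict_Ioo_eq_restrict_Icc]
  have key : ∀ x ∈ Ioo (-1:ℝ) 1, ‖jacobi α β x * stepF K (hq β (1 / p)) ph x‖ₑ ^ (2*p) ≤
      ∑ j ∈ Finset.range K, ENNReal.ofReal (C * (sg j ^ 2)⁻¹) * (Ici (cos (ph j))).indicator 1 x := by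
    intro x hx
    rw [← ofReal_norm, Real.norm_eq_abs, ENNReal.ofReal_rpow_of_nonneg (abs_nonneg _) (by positivity)]
    refine (ENNReal.ofReal_le_ofReal (hpt K x hx)).trans (le_of_eq ?_)
    rw [ENNReal.ofReal_sum_of_nonneg]
    · refine Finset.sum_congr rfl (fun j _ => ?_)
      by_cases h : cos (ph j) ≤ x <;> simp [h]
    · intro j _
      have := sg_pos j
      split_ifs <;> positivity
  refine (setLIntegral_mono' measurableSet_Ioo key).trans ?_
  rw [lintegral_finsetSum _ (fun j _ => (measurable_one.indicator measurableSet_Ici).const_mul _)]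
  have h1 : ∀ j ∈ Finset.range K, ∫⁻ x in Ioo (-1:ℝ) 1,
      ENNReal.ofReal (C * (sg j ^ 2)⁻¹) * (Ici (cos (ph j))).indicator 1 x ≤ ENNReal.ofReal (C * (5/4)) := by
    intro j _
    have hσ := sg_pos j
    rw [lintegral_const_mul _ (measurable_one.indicator measurableSet_Ici),
      lintegral_indicator_one measurableSet_Ici, Measure.restrict_apply measurableSet_Ici]
    have : volume (Ici (cos (ph j)) ∩ Ioo (-1:ℝ) 1) ≤ ENNReal.ofReal (5/4 * sg j ^ 2) := by
      refine (measure_mono (t := Icc (cos (ph j)) 1) ?_).trans ?_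
      · rintro y ⟨h1, h2⟩; exact ⟨h1, h2.2.le⟩
      · rw [Real.volume_Icc]; exact ENNReal.ofReal_le_ofReal (x_upper j)
    refine (mul_le_mul_right this _).trans ?_
    rw [← ENNReal.ofReal_mul (by positivity)]
    apply ENNReal.ofReal_le_ofReal (le_of_eq _)
    field_simp
  refine (Finset.sum_le_sum h1).trans ?_
  rw [Finset.sum_const, Finset.card_range, nsmul_eq_mul, ← ENNReal.ofReal_natCast,
    ← ENNReal.ofReal_mul (by positivity), mul_comm]

end S8


namespace S8

open Real Polynomial

lemma kmono_of_mono (f : ℝ → ℝ) (hf : Monotone f) : kMonotoneOn 1 f := by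
  intro x hinj _
  have hne : x 0 ≠ x 1 := fun h => by simpa using hinj h
  have e0 : (Finset.univ.erase (0 : Fin 2)) = {1} := by decide
  have e1 : (Finset.univ.erase (1 : Fin 2)) = {0} := by decide
  have : ∑ i : Fin (1+1), f (x i) / ∏ j ∈ Finset.univ.erase i, (x i - x j)
      = f (x 0) / (x 0 - x 1) + f (x 1) / (x 1 - x 0) := by
    rw [Fin.sum_univ_two]
    congr 1
    · congr 1
      exact (congrArg (fun s => ∏ j ∈ s, (x 0 - x j)) e0).trans (Finset.prod_singleton _ _)
    · congr 1
      exact (congrArg (fun s => ∏ j ∈ s, (x 1 - x j)) e1).trans (Finset.prod_singleton _ _)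
  rw [this]
  have e : f (x 0) / (x 0 - x 1) + f (x 1) / (x 1 - x 0) = (f (x 0) - f (x 1)) / (x 0 - x 1) := by
    rw [← neg_sub (x 0) (x 1), div_neg, sub_div]; ring
  rw [e]
  rcases le_total (x 0) (x 1) with h | h
  · exact div_nonneg_of_nonpos (by linarith [hf h]) (by linarith)
  · exact div_nonneg (by linarith [hf h]) (by linarith)

lemma LpOn_smul (a : ℝ) (ha : 0 ≤ a) (g : ℝ → ℝ) (q : ℝ≥0∞) :
    LpOn (fun x => a * g x) q (-1) 1 = ENNReal.ofReal a * LpOn g q (-1) 1 := by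
  unfold LpOn
  have := eLpNorm_const_smul a g q (volume.restrict (Icc (-1:ℝ) 1))
  rw [← Real.enorm_of_nonneg ha, ← this]
  rfl

lemma EClass_lower (q : ℝ≥0∞) (hq1 : 1 < q) (hq2 : q ≠ ∞) (α β : ℝ) (hα : 0 ≤ α) (hβ : 0 ≤ β) :
    ∃ c > 0, ∀ K : ℕ, 1 ≤ K →
      ENNReal.ofReal (c * ((K:ℝ) ^ (1 / (2 * q.toReal)) * ((25:ℝ) ^ K) ^ (-(1 / q.toReal)))) ≤
      EClass (MSet 1 ∩ BSet (2 * q) α β) (25 ^ K) (jacobi α β) q := by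
  have hp1 : 1 < q.toReal := by
    have := (ENNReal.toReal_lt_toReal ENNReal.one_ne_top hq2).2 hq1
    simpa using this
  obtain ⟨c, hc, hlow⟩ := err_lower q hq1 hq2 α β hα hβ
  obtain ⟨C, hC, hup⟩ := wf_norm q hq1 hq2 α β hα hβ
  set p := q.toReal with hp
  have hp0 : 0 < p := by linarith
  refine ⟨c / C ^ (1 / (2*p)), by positivity, fun K hK => ?_⟩
  have hKr : (0:ℝ) < K := by exact_mod_cast hK
  set f := stepF K (hq β (1/p)) ph with hf
  set A := LpOn (fun x => jacobi α β x * f x) (2*q) (-1) 1 with hA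
  set B : ℝ := (C * K) ^ (1 / (2*p)) with hB
  have hB0 : 0 < B := by positivity
  have hAB : A ≤ ENNReal.ofReal B := hup K
  have hAt : A ≠ ⊤ := ne_top_of_le_ne_top ENNReal.ofReal_ne_top hAB
  have hfm : Measurable f := stepF_meas _ _ _
  have h2q0 : 2 * q ≠ 0 := by
    refine mul_ne_zero (by norm_num) (by rintro rfl; simp at hq1)
  have hA0 : A ≠ 0 := by
    intro h0
    rw [hA] at h0
    unfold LpOn at h0
    replace h0 := (eLpNorm_eq_zero_iff (((jacobi_meas α β).mul hfm).aestronglyMeasurable (μ := volume.restrict (Icc (-1:ℝ) 1))) h2q0).1 h0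
    change (fun x => jacobi α β x * f x) =ᵐ[volume.restrict (Icc (-1:ℝ) 1)] 0 at h0
    have h1 := hlow K hK 0 (by simp)
    have h2 : LpOn (fun x => jacobi α β x * (f x - (0:ℝ[X]).eval x)) q (-1) 1 = 0 := by
      unfold LpOn
      simp only [eval_zero, sub_zero]
      rw [eLpNorm_congr_ae h0]
      simp
    rw [h2, nonpos_iff_eq_zero, ENNReal.ofReal_eq_zero] at h1
    have : 0 < c * ((K:ℝ) ^ (1 / p) * ((25:ℝ) ^ K) ^ (-(1 / p))) := by positivity
    linarith
  set a := A.toReal with ha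
  have ha0 : 0 < a := ENNReal.toReal_pos hA0 hAt
  have haB : a ≤ B := ENNReal.toReal_le_of_le_ofReal hB0.le hAB
  have hAa : A = ENNReal.ofReal a := (ENNReal.ofReal_toReal hAt).symm
  have hg : (fun x => a⁻¹ * f x) ∈ MSet 1 ∩ BSet (2 * q) α β := by
    refine ⟨show kMonotoneOn 1 (fun x => a⁻¹ * f x) from kmono_of_mono _ ?_, hfm.const_mul _, ?_⟩
    · exact (stepF_mono K _ ph (fun j => (hq_pos β (1/p) j).le)).const_mul (by positivity)
    · have : (fun x => jacobi α β x * (a⁻¹ * f x)) = fun x => a⁻¹ * (jacobi α β x * f x) := by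
        funext x; ring
      simp only [this]
      rw [LpOn_smul _ (by positivity), ← hA, hAa, ← ENNReal.ofReal_mul (by positivity),
        inv_mul_cancel₀ ha0.ne', ENNReal.ofReal_one]
  unfold EClass
  refine le_trans ?_ (le_iSup₂ (f := fun g (_ : g ∈ MSet 1 ∩ BSet (2 * q) α β) =>
    En (25 ^ K) g (jacobi α β) q) _ hg)
  unfold En
  refine le_iInf₂ (fun P hP => ?_)
  have e : (fun x => jacobi α β x * (a⁻¹ * f x - P.eval x)) =
      fun x => a⁻¹ * (jacobi α β x * (f x - (Polynomial.C a * P).eval x)) := by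
    funext x
    rw [eval_mul, eval_C]
    field_simp
  rw [e, LpOn_smul _ (by positivity)]
  have h1 := hlow K hK (Polynomial.C a * P) ((natDegree_C_mul_le _ _).trans hP)
  refine le_trans ?_ (mul_le_mul_right h1 _)
  rw [← ENNReal.ofReal_mul (by positivity)]
  apply ENNReal.ofReal_le_ofReal
  have hBa : B⁻¹ ≤ a⁻¹ := inv_anti₀ ha0 haB
  refine le_trans (le_of_eq ?_) (mul_le_mul_of_nonneg_right hBa (by positivity))
  have e2 : (K:ℝ) ^ (1/p) = (K:ℝ) ^ (1/(2*p)) * (K:ℝ) ^ (1/(2*p)) := by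
    rw [← rpow_add hKr]; congr 1; field_simp; norm_num
  rw [hB, mul_rpow hC.le hKr.le, e2]
  have : (K:ℝ) ^ (1/(2*p)) ≠ 0 := by positivity
  have : C ^ (1/(2*p)) ≠ 0 := by positivity
  generalize (K:ℝ) ^ (1/(2*p)) = u at *
  generalize C ^ (1/(2*p)) = v at *
  generalize ((25:ℝ) ^ K) ^ (-(1 / p)) = w at *
  field_simp

lemma limsup_top_of_subseq (u : ℕ → ℝ≥0∞) (g : ℕ → ℕ) (hg : Tendsto g atTop atTop)
    (h : Tendsto (fun K => u (g K)) atTop (nhds ⊤)) : limsup u atTop = ⊤ := by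
  have h1 : limsup (fun K : ℕ => u (g K)) atTop = ⊤ := h.limsup_eq
  rw [eq_top_iff, ← h1]
  have : limsup (fun K : ℕ => u (g K)) atTop = limsup u (map g atTop) := rfl
  rw [this]
  exact limsup_le_limsup_of_le hg

lemma final (q : ℝ≥0∞) (hq1 : 1 < q) (hq2 : q ≠ ∞)
    (α β : ℝ) (hα : 0 ≤ α) (hβ : 0 ≤ β) (ε : ℝ) (hε : 0 < ε) :
      Filter.limsup (fun n : ℕ =>
          ENNReal.ofReal ((n : ℝ) ^ (1 / q.toReal) *
              Real.log ((n : ℝ) + 1) ^ (-(1 / (2 * q.toReal)) + ε)) *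
            EClass (MSet 1 ∩ BSet (2 * q) α β) n (jacobi α β) q) Filter.atTop = ⊤ := by
  have hp1 : 1 < q.toReal := by
    have := (ENNReal.toReal_lt_toReal ENNReal.one_ne_top hq2).2 hq1
    simpa using this
  obtain ⟨c, hc, hlow⟩ := EClass_lower q hq1 hq2 α β hα hβ
  set p := q.toReal with hp
  have hp0 : 0 < p := by linarith
  set u : ℕ → ℝ≥0∞ := fun n : ℕ =>
          ENNReal.ofReal ((n : ℝ) ^ (1 / p) *
              Real.log ((n : ℝ) + 1) ^ (-(1 / (2 * p)) + ε)) *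
            EClass (MSet 1 ∩ BSet (2 * q) α β) n (jacobi α β) q with hu
  have hT : (0:ℝ) < log 50 := log_pos (by norm_num)
  have htp : Tendsto (fun K : ℕ => 25 ^ K) atTop atTop := tendsto_pow_atTop_atTop_of_one_lt (by norm_num)
  have hL : Tendsto (fun K : ℕ => log ((25:ℝ) ^ K + 1)) atTop atTop := by
    apply tendsto_log_atTop.comp
    exact tendsto_atTop_add_const_right _ _ (tendsto_pow_atTop_atTop_of_one_lt (by norm_num))
  have hlim : Tendsto (fun K : ℕ => ENNReal.ofReal (c / log 50 ^ (1/(2*p)) * log ((25:ℝ) ^ K + 1) ^ ε)) atTop (nhds ⊤) := by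
    apply ENNReal.tendsto_ofReal_atTop.comp
    exact ((tendsto_rpow_atTop hε).comp hL).const_mul_atTop (by positivity)
  have hle : ∀ᶠ K : ℕ in atTop, ENNReal.ofReal (c / log 50 ^ (1/(2*p)) * log ((25:ℝ) ^ K + 1) ^ ε) ≤ u (25 ^ K) := by
    filter_upwards [eventually_ge_atTop 1] with K hK
    have hKr : (0:ℝ) < K := by exact_mod_cast hK
    have hM : (1:ℝ) ≤ 25 ^ K := one_le_pow₀ (by norm_num)
    have hl0 : 0 < log ((25:ℝ) ^ K + 1) := log_pos (by linarith)
    have hl : log ((25:ℝ) ^ K + 1) ≤ K * log 50 := by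
      rw [← log_pow]
      apply log_le_log (by positivity)
      have : (50:ℝ) ^ K = 2 ^ K * 25 ^ K := by rw [← mul_pow]; norm_num
      have h2 : (2:ℝ) ≤ 2 ^ K := by
        calc (2:ℝ) = 2 ^ 1 := by norm_num
          _ ≤ _ := pow_le_pow_right₀ (by norm_num) hK
      rw [this]; nlinarith
    rw [hu]
    simp only [Nat.cast_pow, Nat.cast_ofNat]
    refine le_trans ?_ (mul_le_mul_right (hlow K hK) _)
    rw [← ENNReal.ofReal_mul (by positivity)]
    apply ENNReal.ofReal_le_ofReal
    set l := log ((25:ℝ) ^ K + 1)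
    have h3 : l ^ (1/(2*p)) ≤ (K:ℝ) ^ (1/(2*p)) * log 50 ^ (1/(2*p)) := by
      rw [← mul_rpow hKr.le hT.le]
      exact rpow_le_rpow hl0.le hl (by positivity)
    rw [rpow_add hl0, rpow_neg hl0.le, rpow_neg (by positivity)]
    have a1 : 0 < l ^ (1/(2*p)) := by positivity
    have a2 : 0 < log 50 ^ (1/(2*p)) := by positivity
    have a3 : 0 < ((25:ℝ) ^ K) ^ (1/p) := by positivity
    have a4 : 0 < l ^ ε := by positivity
    generalize l ^ (1/(2*p)) = x at *
    generalize log 50 ^ (1/(2*p)) = y at *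
    generalize ((25:ℝ) ^ K) ^ (1/p) = z at *
    generalize (K:ℝ) ^ (1/(2*p)) = k at *
    generalize l ^ ε = t at *
    have e : z * (x⁻¹ * t) * (c * (k * z⁻¹)) = c * t * (k / x) := by field_simp
    have e' : c / y * t = c * t * (1 / y) := by field_simp
    rw [e, e']
    apply mul_le_mul_of_nonneg_left _ (by positivity)
    rw [div_le_div_iff₀ a2 a1]
    linarith
  have ht : Tendsto (fun K : ℕ => u (25 ^ K)) atTop (nhds ⊤) :=
    tendsto_nhds_top_mono hlim hle
  exact limsup_top_of_subseq u _ htp ht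

end S8

theorem statement8 (q : ℝ≥0∞) (hq1 : 1 < q) (hq2 : q ≠ ∞)
    (α β : ℝ) (hα : 0 ≤ α) (hβ : 0 ≤ β) :
    ∀ ε : ℝ, 0 < ε →
      Filter.limsup (fun n : ℕ =>
          ENNReal.ofReal ((n : ℝ) ^ (1 / q.toReal) *
              Real.log ((n : ℝ) + 1) ^ (-(1 / (2 * q.toReal)) + ε)) *
            EClass (MSet 1 ∩ BSet (2 * q) α β) n (jacobi α β) q) Filter.atTop = ⊤ := by
  intro ε hε
  exact S8.final q hq1 hq2 α β hα hβ ε hε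
end
end

section
/- Let k ∈ ℕ, 1 ≤ p ≤ ∞, α, β ∈ J_p, and let f ∈ M^k ∩ W_p^{α,β}. Let T_{k−1}(f, x) := f_−^{(k−1)}(0)·x^{k−1}/(k−1)! + Σ_{i=0}^{k−2} f^{(i)}(0)·x^i/i!, where f_−^{(k−1)}(0) denotes the left (k−1)st derivative of f at 0 (for k = 1 this is the left limit of f at 0); these quantities exist since f is k-monotone. Then there is a constant c > 0, depending only on k, p, α, β, such that ‖w_{α,β}·T_{k−1}(f)‖_p ≤ c·‖w_{α,β}·f‖_p. -/
open MeasureTheory Set Filter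
open scoped ENNReal

noncomputable section

def dds (f : ℝ → ℝ) (s : Finset ℝ) : ℝ := ∑ x ∈ s, f x / ∏ y ∈ s.erase x, (x - y)

def kM (k : ℕ) (a b : ℝ) (f : ℝ → ℝ) : Prop :=
  ∀ s : Finset ℝ, s.card = k + 1 → (∀ x ∈ s, x ∈ Ioo a b) → 0 ≤ dds f s

lemma kM_of {k : ℕ} {f : ℝ → ℝ} (h : kMonotoneOn k f) : kM k (-1) 1 f := by
  intro s hs hI
  have e := s.orderEmbOfFin hs
  have him : Finset.univ.image (s.orderEmbOfFin hs) = s := by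
    simp
  have := h (s.orderEmbOfFin hs) (s.orderEmbOfFin hs).injective
    (fun i => hI _ (s.orderEmbOfFin_mem hs i))
  refine this.trans_eq ?_
  unfold dds
  conv_rhs => rw [← him]
  rw [Finset.sum_image (fun i _ j _ hij => (s.orderEmbOfFin hs).injective hij)]
  refine Finset.sum_congr rfl fun i _ => ?_
  congr 1
  rw [← Finset.image_erase (s.orderEmbOfFin hs).injective,
    Finset.prod_image (fun i _ j _ hij => (s.orderEmbOfFin hs).injective hij)]

lemma dds_insert (f : ℝ → ℝ) {s : Finset ℝ} {a : ℝ} (ha : a ∉ s) :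
    dds f (insert a s) = f a / ∏ y ∈ s, (a - y) +
      ∑ x ∈ s, f x / ((x - a) * ∏ y ∈ s.erase x, (x - y)) := by
  unfold dds
  rw [Finset.sum_insert ha, Finset.erase_insert ha]
  congr 1
  refine Finset.sum_congr rfl fun x hx => ?_
  have hxa : a ≠ x := fun h => ha (h ▸ hx)
  rw [Finset.erase_insert_of_ne hxa, Finset.prod_insert]
  simp [ha]

lemma dds_sub (f : ℝ → ℝ) {s : Finset ℝ} {a b : ℝ} (ha : a ∉ s) (hb : b ∉ s) (hab : a ≠ b) :
    dds f (insert b s) - dds f (insert a s) = (b - a) * dds f (insert a (insert b s)) := by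
  have ha' : a ∉ insert b s := by simp [ha, hab]
  rw [dds_insert f ha', dds_insert f hb, dds_insert f ha, Finset.sum_insert hb,
    Finset.prod_insert hb, Finset.erase_insert hb, mul_add, mul_add, Finset.mul_sum]
  have hba : b - a ≠ 0 := sub_ne_zero.2 hab.symm
  have hba' : a - b ≠ 0 := sub_ne_zero.2 hab
  have key : ∑ x ∈ s, f x / ((x - b) * ∏ y ∈ s.erase x, (x - y)) -
      ∑ x ∈ s, f x / ((x - a) * ∏ y ∈ s.erase x, (x - y)) =
      ∑ i ∈ s, (b - a) * (f i / ((i - a) * ∏ y ∈ (insert b s).erase i, (i - y))) := by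
    rw [← Finset.sum_sub_distrib]
    refine Finset.sum_congr rfl fun x hx => ?_
    have hxa : x - a ≠ 0 := sub_ne_zero.2 (fun h => ha (h ▸ hx))
    have hxb : b ≠ x := (fun h => hb (h ▸ hx))
    have hxb' : x - b ≠ 0 := sub_ne_zero.2 hxb.symm
    rw [Finset.erase_insert_of_ne hxb, Finset.prod_insert (by simp [hb])]
    have hP : ∏ y ∈ s.erase x, (x - y) ≠ 0 := by
      refine Finset.prod_ne_zero_iff.2 fun y hy => sub_ne_zero.2 ?_
      exact (Finset.ne_of_mem_erase hy).symm
    field_simp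
    ring
  have hPa : ∏ y ∈ s, (a - y) ≠ 0 :=
    Finset.prod_ne_zero_iff.2 fun y hy => sub_ne_zero.2 (fun h => ha (h ▸ hy))
  have hPb : ∏ y ∈ s, (b - y) ≠ 0 :=
    Finset.prod_ne_zero_iff.2 fun y hy => sub_ne_zero.2 (fun h => hb (h ▸ hy))
  rw [← key]
  have e1 : (b - a) * (f a / ((a - b) * ∏ x ∈ s, (a - x))) = - (f a / ∏ x ∈ s, (a - x)) := by
    field_simp; ring
  have e2 : (b - a) * (f b / ((b - a) * ∏ x ∈ s, (b - x))) = (f b / ∏ x ∈ s, (b - x)) := by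
    field_simp
  rw [e1, e2]
  ring

lemma dds_mono_aux {f : ℝ → ℝ} {n : ℕ} {lo hi : ℝ} (hf : kM n lo hi f) {ι : Type*} [DecidableEq ι]
    (a b : ι → ℝ) (s : Finset ι) : ∀ (r : Finset ℝ), r.card + s.card = n →
    (∀ x ∈ r, x ∈ Ioo lo hi) → (∀ i ∈ s, a i ∈ Ioo lo hi) → (∀ i ∈ s, b i ∈ Ioo lo hi) →
    Set.InjOn a s → Set.InjOn b s → (∀ i ∈ s, ∀ j ∈ s, a i ≠ b j) → (∀ i ∈ s, a i < b i) →
    (∀ i ∈ s, a i ∉ r ∧ b i ∉ r) →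
    dds f (r ∪ s.image a) ≤ dds f (r ∪ s.image b) := by
  induction s using Finset.induction_on with
  | empty => intro r; simp
  | insert i s his ih =>
    intro r hc hr ha hb hia hib hab hlt hd
    rw [Finset.card_insert_of_notMem his] at hc
    have hai : ∀ j ∈ s, a j ≠ a i := fun j hj h => his (by
      have := hia (by simp [hj]) (by simp) h; exact this ▸ hj)
    have hbi : ∀ j ∈ s, b j ≠ b i := fun j hj h => his (by
      have := hib (by simp [hj]) (by simp) h; exact this ▸ hj)
    have h1 := ih (insert (a i) r) (by
      rw [Finset.card_insert_of_notMem (hd i (by simp)).1]; omega)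
      (by intro x hx; rcases Finset.mem_insert.1 hx with rfl | hx
          · exact ha _ (by simp)
          · exact hr _ hx)
      (fun j hj => ha j (by simp [hj])) (fun j hj => hb j (by simp [hj]))
      (hia.mono (by simp)) (hib.mono (by simp))
      (fun j hj l hl => hab j (by simp [hj]) l (by simp [hl])) (fun j hj => hlt j (by simp [hj]))
      (fun j hj => by
        have := hd j (by simp [hj])
        have h2 := hab i (by simp) j (by simp [hj])
        simp only [Finset.mem_insert, not_or]
        exact ⟨⟨hai j hj, this.1⟩, ⟨h2.symm, this.2⟩⟩)
    have e1 : r ∪ (insert i s).image a = insert (a i) r ∪ s.image a := by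
      ext x; simp
    have e2 : insert (a i) r ∪ s.image b = insert (a i) (r ∪ s.image b) := by
      ext x; simp
    have e3 : r ∪ (insert i s).image b = insert (b i) (r ∪ s.image b) := by
      ext x; simp
    rw [e1, e3]
    rw [e2] at h1
    refine h1.trans ?_
    have na : a i ∉ r ∪ s.image b := by
      simp only [Finset.mem_union, Finset.mem_image, not_or, not_exists, not_and]
      exact ⟨(hd i (by simp)).1, fun j hj h => hab i (by simp) j (by simp [hj]) h.symm⟩
    have nb : b i ∉ r ∪ s.image b := by
      simp only [Finset.mem_union, Finset.mem_image, not_or, not_exists, not_and]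
      exact ⟨(hd i (by simp)).2, fun j hj h => hbi j hj h⟩
    have hne := hab i (by simp) i (by simp)
    have := dds_sub f na nb hne
    have hpos : 0 ≤ dds f (insert (a i) (insert (b i) (r ∪ s.image b))) := by
      apply hf
      · rw [Finset.card_insert_of_notMem (by
            rw [Finset.mem_insert, not_or]; exact ⟨hne, na⟩),
          Finset.card_insert_of_notMem nb, Finset.card_union_of_disjoint, Finset.card_image_of_injOn]
        · omega
        · exact hib.mono (by simp)
        · rw [Finset.disjoint_left]
          intro x hx hx'
          obtain ⟨j, hj, rfl⟩ := Finset.mem_image.1 hx'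
          exact (hd j (by simp [hj])).2 hx
      · intro x hx
        simp only [Finset.mem_insert, Finset.mem_union, Finset.mem_image] at hx
        rcases hx with rfl | rfl | hx | ⟨j, hj, rfl⟩
        · exact ha i (by simp)
        · exact hb i (by simp)
        · exact hr x hx
        · exact hb j (by simp [hj])
    have h3 : 0 ≤ (b i - a i) * dds f (insert (a i) (insert (b i) (r ∪ s.image b))) :=
      mul_nonneg (sub_nonneg.2 (hlt i (by simp)).le) hpos
    linarith

lemma dds_mono {f : ℝ → ℝ} {n : ℕ} {lo hi : ℝ} (hf : kM n lo hi f) {ι : Type*} [DecidableEq ι]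
    (a b : ι → ℝ) (s : Finset ι) (hc : s.card = n)
    (ha : ∀ i ∈ s, a i ∈ Ioo lo hi) (hb : ∀ i ∈ s, b i ∈ Ioo lo hi)
    (hia : Set.InjOn a s) (hib : Set.InjOn b s) (hab : ∀ i ∈ s, ∀ j ∈ s, a i ≠ b j)
    (hlt : ∀ i ∈ s, a i < b i) :
    dds f (s.image a) ≤ dds f (s.image b) := by
  have := dds_mono_aux hf a b s ∅ (by simpa using hc) (by simp) ha hb hia hib hab hlt (by simp)
  simpa using this

lemma dds_mono_sep {f : ℝ → ℝ} {n : ℕ} {lo hi : ℝ} (hf : kM n lo hi f) (s t : Finset ℝ)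
    (hs : s.card = n) (ht : t.card = n) (hsI : ∀ x ∈ s, x ∈ Ioo lo hi)
    (htI : ∀ x ∈ t, x ∈ Ioo lo hi) (hst : ∀ x ∈ s, ∀ y ∈ t, x < y) : dds f s ≤ dds f t := by
  have := dds_mono hf (s.orderEmbOfFin hs) (t.orderEmbOfFin ht) Finset.univ (by simp)
    (fun i _ => hsI _ (s.orderEmbOfFin_mem hs i)) (fun i _ => htI _ (t.orderEmbOfFin_mem ht i))
    (s.orderEmbOfFin hs).injective.injOn (t.orderEmbOfFin ht).injective.injOn
    (fun i _ j _ => (hst _ (s.orderEmbOfFin_mem hs i) _ (t.orderEmbOfFin_mem ht j)).ne)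
    (fun i _ => (hst _ (s.orderEmbOfFin_mem hs i) _ (t.orderEmbOfFin_mem ht i)))
  simpa using this

lemma exists_card (a b : ℝ) (h : a < b) (n : ℕ) :
    ∃ s : Finset ℝ, s.card = n ∧ ∀ x ∈ s, x ∈ Ioo a b := by
  obtain ⟨t, ht, hc⟩ := (Ioo_infinite h).exists_subset_card_eq n
  exact ⟨t, hc, fun x hx => ht hx⟩

lemma dds_bdd {f : ℝ → ℝ} {n : ℕ} {lo hi a b : ℝ} (hf : kM n lo hi f) (h1 : lo < a) (h2 : a < b)
    (h3 : b < hi) : ∃ K, 0 ≤ K ∧ ∀ s : Finset ℝ, s.card = n → (∀ x ∈ s, x ∈ Ioo a b) →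
      |dds f s| ≤ K := by
  obtain ⟨A, hA, hAI⟩ := exists_card lo a h1 n
  obtain ⟨B, hB, hBI⟩ := exists_card b hi h3 n
  refine ⟨|dds f A| + |dds f B|, by positivity, fun s hs hI => ?_⟩
  have hsI : ∀ x ∈ s, x ∈ Ioo lo hi := fun x hx => ⟨h1.trans (hI x hx).1, (hI x hx).2.trans h3⟩
  have l1 := dds_mono_sep hf A s hA hs (fun x hx => ⟨(hAI x hx).1, by linarith [(hAI x hx).2]⟩) hsI
    (fun x hx y hy => (hAI x hx).2.trans (hI y hy).1)
  have l2 := dds_mono_sep hf s B hs hB hsI (fun x hx => ⟨by linarith [(hBI x hx).1], (hBI x hx).2⟩)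
    (fun x hx y hy => (hI x hx).2.trans (hBI y hy).1)
  rw [abs_le]
  constructor <;> linarith [neg_abs_le (dds f A), le_abs_self (dds f B), abs_nonneg (dds f A), abs_nonneg (dds f B)]

lemma dds_pow (n : ℕ) (s : Finset ℝ) (hs : s.card = n + 1) : dds (fun x => x ^ n) s = 1 := by
  have := Lagrange.coeff_eq_sum (s := s) (v := id) (P := Polynomial.X ^ n) Function.injective_id.injOn
    (by rw [hs, Polynomial.degree_X_pow]; exact_mod_cast Nat.lt_succ_self n)
  simp [hs] at this
  unfold dds
  exact this.symm

lemma dds_add_mul (f g : ℝ → ℝ) (K : ℝ) (s : Finset ℝ) :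
    dds (fun x => f x + K * g x) s = dds f s + K * dds g s := by
  unfold dds
  rw [Finset.mul_sum, ← Finset.sum_add_distrib]
  refine Finset.sum_congr rfl fun x _ => ?_
  ring

lemma dds3_bdd (n : ℕ) : ∀ {f : ℝ → ℝ} {lo hi a b : ℝ}, kM (n + 3) lo hi f → lo < a → a < b → 
    b < hi → ∃ K, 0 ≤ K ∧ ∀ s : Finset ℝ, s.card = 3 → (∀ x ∈ s, x ∈ Ioo a b) →
      |dds f s| ≤ K := by
  induction n with
  | zero => intro f lo hi a b hf h1 h2 h3; exact dds_bdd hf h1 h2 h3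
  | succ n ih =>
    intro f lo hi a b hf h1 h2 h3
    obtain ⟨a', ha1, ha2⟩ := exists_between h1
    obtain ⟨b', hb1, hb2⟩ := exists_between h3
    obtain ⟨K, hK, hKs⟩ := dds_bdd hf ha1 (by linarith) hb2
    have hp : kM (n + 3) a' b' (fun x => x ^ (n + 3)) := by
      intro s hs _
      rw [dds_pow _ _ hs]; norm_num
    have hg : kM (n + 3) a' b' (fun x => f x + K * x ^ (n + 3)) := by
      intro s hs hI
      rw [dds_add_mul f (fun x => x ^ (n + 3)), dds_pow _ _ hs]
      have := (abs_le.1 (hKs s (by omega) hI)).1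
      linarith
    obtain ⟨K1, hK1, hK1s⟩ := ih hp ha2 h2 hb1
    obtain ⟨K2, hK2, hK2s⟩ := ih hg ha2 h2 hb1
    refine ⟨K2 + K * K1, by positivity, fun s hs hI => ?_⟩
    have e1 := hK1s s hs hI
    have e2 := hK2s s hs hI
    rw [dds_add_mul f (fun x => x ^ (n + 3))] at e2
    have : dds f s = (dds f s + K * dds (fun x => x ^ (n + 3)) s) - K * dds (fun x => x ^ (n + 3)) s := by
      ring
    rw [this]
    refine (abs_sub _ _).trans (add_le_add e2 ?_)
    rw [abs_mul, abs_of_nonneg hK]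
    gcongr

lemma dds_pair (f : ℝ → ℝ) {a b : ℝ} (h : a ≠ b) : dds f {a, b} = (f b - f a) / (b - a) := by
  have h1 : b - a ≠ 0 := sub_ne_zero.2 h.symm
  have h2 : a - b ≠ 0 := sub_ne_zero.2 h
  rw [dds_insert f (by simpa using h)]
  simp
  field_simp
  ring

lemma kM_diff {n : ℕ} {f : ℝ → ℝ} {lo hi : ℝ} (hf : kM (n + 3) lo hi f) {x : ℝ} (hx : x ∈ Ioo lo hi) :
    DifferentiableAt ℝ f x := by
  obtain ⟨a, ha1, ha2⟩ := exists_between hx.1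
  obtain ⟨b, hb1, hb2⟩ := exists_between hx.2
  obtain ⟨K, hK, hKs⟩ := dds3_bdd n hf ha1 (ha2.trans hb1) hb2
  have hL : LipschitzOnWith K.toNNReal (slope f x) (Ioo a b \ {x}) := by
    apply LipschitzOnWith.of_dist_le_mul
    intro y hy z hz
    rw [Real.coe_toNNReal _ hK, Real.dist_eq, Real.dist_eq]
    by_cases hyz : y = z
    · simp [hyz]
    have hyx : y ≠ x := hy.2
    have hzx : z ≠ x := hz.2
    have := dds_sub f (s := {x}) (a := z) (b := y) (by simpa using hzx) (by simpa using hyx) (Ne.symm hyz)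
    rw [dds_pair f hyx, dds_pair f hzx] at this
    have e : slope f x y - slope f x z = (y - z) * dds f {z, y, x} := by
      rw [← this, slope_def_field, slope_def_field]
      have h1 : y - x ≠ 0 := sub_ne_zero.2 hyx
      have h2 : z - x ≠ 0 := sub_ne_zero.2 hzx
      have h1' : x - y ≠ 0 := sub_ne_zero.2 hyx.symm
      have h2' : x - z ≠ 0 := sub_ne_zero.2 hzx.symm
      rw [← neg_sub (f y) (f x), ← neg_sub (f z) (f x), ← neg_sub y x, ← neg_sub z x, neg_div_neg_eq,
        neg_div_neg_eq]
    rw [e, abs_mul, mul_comm]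
    gcongr
    apply hKs
    · rw [Finset.card_eq_three]; exact ⟨z, y, x, Ne.symm hyz, hzx, hyx, rfl⟩
    · intro w hw
      simp only [Finset.mem_insert, Finset.mem_singleton] at hw
      rcases hw with rfl | rfl | rfl
      · exact hz.1
      · exact hy.1
      · exact ⟨ha2, hb1⟩
  obtain ⟨g, hg, hgE⟩ := hL.extend_real
  have : HasDerivAt f (g x) x := by
    rw [hasDerivAt_iff_tendsto_slope]
    have : Tendsto g (nhdsWithin x {x}ᶜ) (nhds (g x)) :=
      hg.continuous.continuousAt.tendsto.mono_left nhdsWithin_le_nhds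
    refine this.congr' ?_
    filter_upwards [self_mem_nhdsWithin, nhdsWithin_le_nhds (Ioo_mem_nhds ha2 hb1)] with y h1 h2
    exact (hgE ⟨h2, h1⟩).symm
  exact this.differentiableAt

lemma kM_deriv {n : ℕ} {f : ℝ → ℝ} {lo hi : ℝ} (hf : kM (n + 1) lo hi f)
    (hd : ∀ x ∈ Ioo lo hi, DifferentiableAt ℝ f x) : kM n lo hi (deriv f) := by
  intro s hs hI
  set φ : ℝ → ℝ := fun h => ∑ x ∈ s, f (x + h) / ∏ y ∈ s.erase x, (x - y) with hφ
  have hφ' : ∀ h, φ h = dds f (s.image (fun x => x + h)) := by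
    intro h
    have hinj : Function.Injective (fun x : ℝ => x + h) := add_left_injective h
    unfold dds
    rw [Finset.sum_image hinj.injOn]
    refine Finset.sum_congr rfl fun x _ => ?_
    rw [← Finset.image_erase hinj, Finset.prod_image hinj.injOn]
    simp
  have hder : HasDerivAt φ (dds (deriv f) s) 0 := by
    unfold dds
    apply HasDerivAt.fun_sum
    intro x hx
    apply HasDerivAt.div_const
    have h1 : HasDerivAt f (deriv f x) (x + 0) := by
      rw [add_zero]; exact (hd x (hI x hx)).hasDerivAt
    exact h1.comp_const_add x 0
  have hs1 := (hasDerivAt_iff_tendsto_slope_left_right.1 hder).2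
  refine ge_of_tendsto hs1 ?_
  have ev1 : ∀ᶠ h in nhdsWithin (0:ℝ) (Ioi 0), ∀ x ∈ s, x + h ∈ Ioo lo hi := by
    rw [Filter.eventually_all_finset]
    intro x hx
    apply nhdsWithin_le_nhds
    have : ContinuousAt (fun h : ℝ => x + h) 0 := by fun_prop
    exact this.eventually_mem (by rw [add_zero]; exact Ioo_mem_nhds (hI x hx).1 (hI x hx).2)
  have ev2 : ∀ᶠ h in nhdsWithin (0:ℝ) (Ioi 0), ∀ x ∈ s, ∀ y ∈ s, x ≠ y + h := by
    rw [Filter.eventually_all_finset]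
    intro x hx
    rw [Filter.eventually_all_finset]
    intro y hy
    by_cases hxy : x ≤ y
    · filter_upwards [self_mem_nhdsWithin] with h hh
      have : 0 < h := hh
      linarith
    · push Not at hxy
      have : ∀ᶠ h in nhdsWithin (0:ℝ) (Ioi 0), h < x - y :=
        nhdsWithin_le_nhds (Iio_mem_nhds (by linarith))
      filter_upwards [this] with h hh
      linarith
  filter_upwards [ev1, ev2, self_mem_nhdsWithin] with h h1 h2 h3
  have h3 : 0 < h := h3
  rw [slope_def_field]
  apply div_nonneg _ (by linarith)
  rw [sub_nonneg, hφ', hφ']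
  apply dds_mono hf
  · exact hs
  · simpa using hI
  · exact h1
  · exact (add_left_injective _).injOn
  · exact (add_left_injective _).injOn
  · simpa using h2
  · intro i _; linarith

def GoodP (F : ℝ → ℝ → ℝ) (M : ℝ) (f : ℝ → ℝ) : Prop :=
  ∀ u v : ℝ, -1 ≤ u → u < v → v ≤ 1 → ∃ x ∈ Ioo u v, |f x| ≤ F u v * M

lemma zero_aux {k : ℕ} {f : ℝ → ℝ} (hf : kM k (-1) 1 f) {δ B : ℝ} (hδ : 0 < δ) (s : Finset ℝ)
    (hs : s.card = k) (hI : ∀ x ∈ s, |x| < 1) (h0 : ∀ x ∈ s, δ ≤ |x|)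
    (hsep : ∀ x ∈ s, ∀ y ∈ s, x ≠ y → δ ≤ |x - y|) (hB : ∀ x ∈ s, |f x| ≤ B) :
    (0 < ∏ y ∈ s, (0 - y) → - f 0 ≤ k * (B / δ ^ k)) ∧
    (∏ y ∈ s, (0 - y) < 0 → f 0 ≤ k * (B / δ ^ k)) := by
  have hn : (0:ℝ) ∉ s := fun h => by have := h0 _ h; simp at this; linarith
  have hpos : 0 ≤ dds f (insert 0 s) := by
    apply hf
    · rw [Finset.card_insert_of_notMem hn, hs]
    · intro x hx
      rcases Finset.mem_insert.1 hx with rfl | hx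
      · norm_num
      · exact abs_lt.1 (hI x hx)
  rw [dds_insert f hn] at hpos
  set R := ∑ x ∈ s, f x / ((x - 0) * ∏ y ∈ s.erase x, (x - y)) with hR
  have hRb : |R| ≤ k * (B / δ ^ k) := by
    refine (Finset.abs_sum_le_sum_abs _ _).trans ?_
    rw [← hs, ← nsmul_eq_mul]
    apply Finset.sum_le_card_nsmul
    intro x hx
    rw [abs_div, abs_mul, sub_zero, Finset.abs_prod]
    have hB0 : 0 ≤ B := (abs_nonneg _).trans (hB x hx)
    have h1 : δ ^ s.card ≤ |x| * ∏ y ∈ s.erase x, |x - y| := by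
      have : δ ^ (s.erase x).card ≤ ∏ y ∈ s.erase x, |x - y| := by
        rw [← Finset.prod_const]
        apply Finset.prod_le_prod
        · intros; exact hδ.le
        · intro y hy
          exact hsep x hx y (Finset.mem_of_mem_erase hy) (Finset.ne_of_mem_erase hy).symm
      rw [← Finset.card_erase_add_one hx, pow_succ, mul_comm]
      exact mul_le_mul (h0 x hx) this (by positivity) (abs_nonneg _)
    exact div_le_div₀ hB0 (hB x hx) (by positivity) h1
  have hP1 : |∏ y ∈ s, (0 - y)| ≤ 1 := by
    rw [Finset.abs_prod]
    apply Finset.prod_le_one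
    · intros; positivity
    · intro y hy
      simpa using (hI y hy).le
  set P := ∏ y ∈ s, (0 - y)
  have hC : 0 ≤ k * (B / δ ^ k) := (abs_nonneg _).trans hRb
  have hRb' := abs_le.1 hRb
  have hP1' := abs_le.1 hP1
  constructor
  · intro hP
    have h1 : -(R * P) ≤ f 0 := by
      have := mul_nonneg hpos hP.le
      rw [add_mul, div_mul_cancel₀ _ hP.ne'] at this
      linarith
    nlinarith
  · intro hP
    have h1 : f 0 ≤ -(R * P) := by
      have := mul_nonneg_of_nonpos_of_nonpos (neg_nonpos.2 hpos) hP.le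
      rw [neg_mul, add_mul, div_mul_cancel₀ _ hP.ne] at this
      linarith
    nlinarith

lemma zero_aux2 {k : ℕ} {f : ℝ → ℝ} (hf : kM k (-1) 1 f) {δ B : ℝ} (hδ : 0 < δ) (y : ℕ → ℝ)
    (hI : ∀ i < k, |y i| < 1) (h0 : ∀ i < k, δ ≤ |y i|)
    (hsep : ∀ i < k, ∀ j < k, i < j → δ ≤ y j - y i) (hB : ∀ i < k, |f (y i)| ≤ B) :
    (0 < ∏ i ∈ Finset.range k, (0 - y i) → - f 0 ≤ k * (B / δ ^ k)) ∧
    (∏ i ∈ Finset.range k, (0 - y i) < 0 → f 0 ≤ k * (B / δ ^ k)) := by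
  have hinj : Set.InjOn y (Finset.range k) := by
    intro i hi j hj h
    simp at hi hj
    rcases lt_trichotomy i j with h1 | h1 | h1
    · have := hsep i hi j hj h1; linarith
    · exact h1
    · have := hsep j hj i hi h1; linarith
  have := zero_aux hf (B := B) hδ ((Finset.range k).image y) (by simp [Finset.card_image_of_injOn hinj])
    (by simpa using hI) (by simpa using h0) (by
      simp only [Finset.mem_image, Finset.mem_range]
      rintro _ ⟨i, hi, rfl⟩ _ ⟨j, hj, rfl⟩ hne
      rcases lt_trichotomy i j with h1 | h1 | h1
      · have := hsep i hi j hj h1; rw [abs_sub_comm]; exact this.trans (le_abs_self _)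
      · subst h1; exact absurd rfl hne
      · have := hsep j hj i hi h1; exact this.trans (le_abs_self _)) (by simpa using hB)
  rwa [Finset.prod_image hinj] at this

lemma zero_bound (m : ℕ) (F : ℝ → ℝ → ℝ) : ∃ C : ℝ, 0 ≤ C ∧ ∀ f, kM (m + 1) (-1) 1 f → ∀ M : ℝ, 0 < M →
    GoodP F M f → |f 0| ≤ C * M := by
  set δ : ℝ := 1 / (2 * (m + 1) + 2) with hδ
  have hδ0 : 0 < δ := by positivity
  have hδm : δ * (2 * (m + 1) + 2) = 1 := by rw [hδ]; field_simp
  set A := ∑ j ∈ Finset.range (m + 1), |F ((2 * j + 1) * δ) ((2 * j + 2) * δ)| + |F (-(2 * δ)) (-δ)| with hA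
  have hA0 : 0 ≤ A := by positivity
  refine ⟨(m + 1 : ℕ) * (A / δ ^ (m + 1)), by positivity, fun f hf M hM hG => ?_⟩
  have hlt : ∀ j : ℕ, j < m + 1 → (2 * (j:ℝ) + 2) * δ < 1 := by
    intro j hj
    have : (j : ℝ) + 1 ≤ m + 1 := by exact_mod_cast hj
    nlinarith
  have hch : ∀ j : ℕ, ∃ x, j < m + 1 → x ∈ Ioo ((2 * j + 1) * δ) ((2 * j + 2) * δ) ∧
      |f x| ≤ F ((2 * j + 1) * δ) ((2 * j + 2) * δ) * M := by
    intro j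
    by_cases hj : j < m + 1
    · obtain ⟨x, hx, h⟩ := hG ((2 * j + 1) * δ) ((2 * j + 2) * δ)
        ((by norm_num : (-1:ℝ) ≤ 0).trans (by positivity)) (by nlinarith) (hlt j hj).le
      exact ⟨x, fun _ => ⟨hx, h⟩⟩
    · exact ⟨0, fun h => absurd h hj⟩
  choose y hy using hch
  have h2d : 2 * δ < 1 := by simpa using hlt 0 (by omega)
  obtain ⟨z, hz, hzf⟩ := hG (-(2 * δ)) (-δ) (by linarith) (by linarith) (by linarith)
  have hFA : ∀ j < m + 1, |f (y j)| ≤ A * M := by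
    intro j hj
    refine (hy j hj).2.trans ?_
    apply mul_le_mul_of_nonneg_right _ hM.le
    refine (le_abs_self _).trans ?_
    have := Finset.single_le_sum (f := fun j : ℕ => |F ((2 * j + 1) * δ) ((2 * j + 2) * δ)|)
      (fun i _ => abs_nonneg _) (Finset.mem_range.2 hj)
    have h2 := abs_nonneg (F (-(2 * δ)) (-δ))
    linarith
  have hzA : |f z| ≤ A * M := by
    refine hzf.trans ?_
    apply mul_le_mul_of_nonneg_right _ hM.le
    refine (le_abs_self _).trans ?_
    have : 0 ≤ ∑ j ∈ Finset.range (m + 1), |F ((2 * j + 1) * δ) ((2 * j + 2) * δ)| := by positivity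
    linarith
  have hyp : ∀ j < m + 1, δ ≤ y j := by
    intro j hj
    have := (hy j hj).1.1
    have : 0 ≤ (j : ℝ) * δ := by positivity
    linarith
  have hsep : ∀ i < m + 1, ∀ j < m + 1, i < j → δ ≤ y j - y i := by
    intro i hi j hj hij
    have h1 := (hy j hj).1.1
    have h2 := (hy i hi).1.2
    have : (i : ℝ) + 1 ≤ j := by exact_mod_cast hij
    nlinarith
  have r1 := zero_aux2 hf hδ0 y (fun i hi => by
      rw [abs_of_pos (hδ0.trans_le (hyp i hi))]; exact (hy i hi).1.2.trans (hlt i hi))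
    (fun i hi => (hyp i hi).trans (le_abs_self _)) hsep hFA
  set y' : ℕ → ℝ := fun i => if i = 0 then z else y i with hy'
  have r2 := zero_aux2 hf hδ0 (B := A * M) y' (fun i hi => by
      simp only [hy']; split_ifs
      · rw [abs_lt]; constructor <;> linarith [hz.1, hz.2]
      · rw [abs_of_pos (hδ0.trans_le (hyp i hi))]; exact (hy i hi).1.2.trans (hlt i hi))
    (fun i hi => by
      simp only [hy']; split_ifs
      · rw [abs_of_neg] <;> linarith [hz.1, hz.2]
      · exact (hyp i hi).trans (le_abs_self _))
    (fun i hi j hj hij => by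
      have hj0 : j ≠ 0 := by omega
      simp only [hy', hj0, if_false]
      split_ifs
      · linarith [hyp j hj, hz.2]
      · exact hsep i hi j hj hij)
    (fun i hi => by
      simp only [hy']; split_ifs
      · exact hzA
      · exact hFA i hi)
  rw [Finset.prod_range_succ'] at r1 r2
  simp only [hy', Nat.add_eq_zero_iff, one_ne_zero, and_false, if_false, if_true] at r2
  set Q := ∏ i ∈ Finset.range m, (0 - y (i + 1)) with hQ
  have hQ0 : Q ≠ 0 := by
    rw [hQ, Finset.prod_ne_zero_iff]
    intro i hi
    have := hyp (i + 1) (by simpa using hi)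
    linarith
  have hy0 := hyp 0 (by omega)
  have hz2 := hz.2
  have e : ((m + 1 : ℕ) : ℝ) * (A / δ ^ (m + 1)) * M = (m + 1 : ℕ) * (A * M / δ ^ (m + 1)) := by ring
  rw [e, abs_le, neg_le]
  rcases lt_or_gt_of_ne hQ0 with hq | hq
  · exact ⟨r1.1 (by nlinarith), r2.2 (by nlinarith)⟩
  · exact ⟨r2.1 (by nlinarith), r1.2 (by nlinarith)⟩

def Fd (F : ℝ → ℝ → ℝ) : ℝ → ℝ → ℝ := fun u v =>
  (F u (u + (v - u) / 3) + F (v - (v - u) / 3) v) / ((v - u) / 3)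

lemma good_deriv {F : ℝ → ℝ → ℝ} {M : ℝ} {f : ℝ → ℝ} (hM : 0 < M) (h : GoodP F M f)
    (hd : ∀ x ∈ Ioo (-1 : ℝ) 1, DifferentiableAt ℝ f x) : GoodP (Fd F) M (deriv f) := by
  intro u v hu huv hv
  obtain ⟨x, hx, hfx⟩ := h u (u + (v - u) / 3) hu (by linarith) (by linarith)
  obtain ⟨y, hy, hfy⟩ := h (v - (v - u) / 3) v (by linarith) (by linarith) hv
  have hxy : (v - u) / 3 < y - x := by linarith [hx.2, hy.1]
  have hxy' : x < y := by linarith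
  have hD : ∀ z ∈ Icc x y, DifferentiableAt ℝ f z := fun z hz =>
    hd z ⟨by linarith [hz.1, hx.1], by linarith [hz.2, hy.2]⟩
  obtain ⟨c, hc, hce⟩ := exists_deriv_eq_slope f hxy'
    (fun z hz => (hD z hz).continuousAt.continuousWithinAt)
    (fun z hz => (hD z (Ioo_subset_Icc_self hz)).differentiableWithinAt)
  refine ⟨c, ⟨by linarith [hc.1, hx.1], by linarith [hc.2, hy.2]⟩, ?_⟩
  rw [hce, abs_div, abs_of_pos (by linarith : 0 < y - x), Fd, div_mul_eq_mul_div]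
  apply div_le_div₀ ((abs_nonneg _).trans _) _ (by linarith) hxy.le
  · exact f y - f x
  all_goals
    refine (abs_sub _ _).trans ?_
    linarith

lemma main_ind (n : ℕ) : ∀ F : ℝ → ℝ → ℝ, ∃ C : ℝ, 0 ≤ C ∧ ∀ f, kM (n + 2) (-1) 1 f →
    ∀ M : ℝ, 0 < M → GoodP F M f → ∀ L : ℝ, HasDerivWithinAt (iteratedDeriv n f) L (Iic 0) 0 →
    |L| ≤ C * M ∧ ∀ i < n + 1, |iteratedDeriv i f 0| ≤ C * M := by
  induction n with
  | zero =>
    intro F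
    obtain ⟨C, hC, hCf⟩ := zero_bound 1 F
    refine ⟨2 * (C + |F (-1) (-1/2)| + |F (1/2) 1|), by positivity, fun f hf M hM hG L hL => ?_⟩
    have h0 := hCf f hf M hM hG
    have a1 : 0 ≤ |F (-1) (-1/2)| * M := by positivity
    have a2 : 0 ≤ |F (1/2) 1| * M := by positivity
    have a3 : 0 ≤ C * M := by positivity
    refine ⟨?_, fun i hi => ?_⟩
    · obtain ⟨y, hy, hyf⟩ := hG (-1) (-1/2) (by norm_num) (by norm_num) (by norm_num)
      obtain ⟨z, hz, hzf⟩ := hG (1/2) 1 (by norm_num) (by norm_num) (by norm_num)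
      have hyf' : |f y| ≤ |F (-1) (-1/2)| * M :=
        hyf.trans (mul_le_mul_of_nonneg_right (le_abs_self _) hM.le)
      have hzf' : |f z| ≤ |F (1/2) 1| * M :=
        hzf.trans (mul_le_mul_of_nonneg_right (le_abs_self _) hM.le)
      rw [iteratedDeriv_zero, hasDerivWithinAt_iff_tendsto_slope] at hL
      have hset : Iic (0:ℝ) \ {0} = Iio 0 := Iic_sdiff_right
      rw [hset] at hL
      have hslope : ∀ t : ℝ, t ≠ 0 → slope f 0 t = dds f {t, 0} := by
        intro t ht
        rw [slope_comm, slope_def_field, dds_pair f ht]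
      have hmono : ∀ s t : ℝ, s ∈ Ioo (-1:ℝ) 1 → t ∈ Ioo (-1:ℝ) 1 → s ≠ 0 → t ≠ 0 → s < t →
          dds f {s, 0} ≤ dds f {t, 0} := by
        intro s t hs ht hs0 ht0 hst
        have := dds_sub f (s := {0}) (a := s) (b := t) (by simpa using hs0) (by simpa using ht0) hst.ne
        have h3 : 0 ≤ dds f {s, t, 0} := by
          apply hf
          · rw [Finset.card_eq_three]; exact ⟨s, t, 0, hst.ne, hs0, ht0, rfl⟩
          · intro w hw
            simp only [Finset.mem_insert, Finset.mem_singleton] at hw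
            rcases hw with rfl | rfl | rfl
            · exact hs
            · exact ht
            · norm_num
        have := mul_nonneg (sub_nonneg.2 hst.le) h3
        linarith
      have hy0 : y < 0 := by linarith [hy.2]
      have hz0 : 0 < z := by linarith [hz.1]
      have l1 : dds f {y, 0} ≤ L := by
        refine ge_of_tendsto hL ?_
        filter_upwards [self_mem_nhdsWithin, nhdsWithin_le_nhds (Ioi_mem_nhds hy0)] with t h1 h2
        have h1 : t < 0 := h1
        have h2 : y < t := h2
        rw [hslope t h1.ne]
        exact hmono y t ⟨hy.1, by linarith⟩ ⟨by linarith [hy.1], by linarith⟩ hy0.ne h1.ne h2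
      have l2 : L ≤ dds f {z, 0} := by
        refine le_of_tendsto hL ?_
        filter_upwards [self_mem_nhdsWithin, nhdsWithin_le_nhds (Ioi_mem_nhds hy0)] with t h1 h2
        have h1 : t < 0 := h1
        have h2 : y < t := h2
        rw [hslope t h1.ne]
        exact hmono t z ⟨by linarith [hy.1], by linarith⟩ ⟨by linarith, hz.2⟩ h1.ne hz0.ne' (by linarith)
      rw [dds_pair f hy0.ne] at l1
      rw [dds_pair f hz0.ne'] at l2
      have h0' := abs_le.1 h0
      have hy' := abs_le.1 hyf'
      have hz' := abs_le.1 hzf'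
      have m1 : -(2 * (C * M + |F (-1) (-1/2)| * M)) ≤ (f 0 - f y) / (0 - y) := by
        rw [le_div_iff₀ (by linarith)]
        have := hy.2
        nlinarith
      have m2 : (f 0 - f z) / (0 - z) ≤ 2 * (C * M + |F (1/2) 1| * M) := by
        rw [← neg_sub (f z), zero_sub, neg_div_neg_eq, div_le_iff₀ (by linarith)]
        have := hz.1
        nlinarith
      rw [abs_le]
      constructor <;> nlinarith
    · have : i = 0 := by omega
      subst this
      rw [iteratedDeriv_zero]
      nlinarith
  | succ n ih =>
    intro F
    obtain ⟨C1, hC1, hC1f⟩ := zero_bound (n + 2) F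
    obtain ⟨C2, hC2, hC2f⟩ := ih (Fd F)
    refine ⟨C1 + C2, by positivity, fun f hf M hM hG L hL => ?_⟩
    have hd : ∀ x ∈ Ioo (-1 : ℝ) 1, DifferentiableAt ℝ f x := fun x hx => kM_diff (n := n) hf hx
    have hk := kM_deriv (n := n + 2) hf hd
    rw [iteratedDeriv_succ'] at hL
    obtain ⟨r1, r2⟩ := hC2f (deriv f) hk M hM (good_deriv hM hG hd) L hL
    have a1 : 0 ≤ C1 * M := by positivity
    have a2 : 0 ≤ C2 * M := by positivity
    refine ⟨by linarith, fun i hi => ?_⟩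
    cases i with
    | zero =>
      rw [iteratedDeriv_zero]
      have := hC1f f hf M hM hG
      linarith
    | succ i =>
      rw [iteratedDeriv_succ']
      have := r2 i (by omega)
      linarith

lemma k_one (F : ℝ → ℝ → ℝ) : ∃ C : ℝ, 0 ≤ C ∧ ∀ f, kM 1 (-1) 1 f →
    ∀ M : ℝ, 0 < M → GoodP F M f → ∀ L : ℝ, Filter.Tendsto f (nhdsWithin 0 (Iio 0)) (nhds L) →
    |L| ≤ C * M := by
  refine ⟨|F (-1) 0| + |F 0 1|, by positivity, fun f hf M hM hG L hL => ?_⟩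
  obtain ⟨y, hy, hyf⟩ := hG (-1) 0 (by norm_num) (by norm_num) (by norm_num)
  obtain ⟨z, hz, hzf⟩ := hG 0 1 (by norm_num) (by norm_num) (by norm_num)
  have hyf' : |f y| ≤ |F (-1) 0| * M :=
    hyf.trans (mul_le_mul_of_nonneg_right (le_abs_self _) hM.le)
  have hzf' : |f z| ≤ |F 0 1| * M :=
    hzf.trans (mul_le_mul_of_nonneg_right (le_abs_self _) hM.le)
  have hmono : ∀ s t : ℝ, s ∈ Ioo (-1:ℝ) 1 → t ∈ Ioo (-1:ℝ) 1 → s < t → f s ≤ f t := by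
    intro s t hs ht hst
    have h3 : 0 ≤ dds f {s, t} := by
      apply hf
      · exact Finset.card_pair hst.ne
      · intro w hw
        simp only [Finset.mem_insert, Finset.mem_singleton] at hw
        rcases hw with rfl | rfl
        · exact hs
        · exact ht
    rw [dds_pair f hst.ne] at h3
    have := mul_nonneg h3 (sub_nonneg.2 hst.le)
    rw [div_mul_cancel₀ _ (by linarith)] at this
    linarith
  have l1 : f y ≤ L := by
    refine ge_of_tendsto hL ?_
    filter_upwards [self_mem_nhdsWithin, nhdsWithin_le_nhds (Ioi_mem_nhds hy.2)] with t h1 h2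
    have h1 : t < 0 := h1
    have h2 : y < t := h2
    exact hmono y t ⟨hy.1, by linarith⟩ ⟨by linarith [hy.1], by linarith⟩ h2
  have l2 : L ≤ f z := by
    refine le_of_tendsto hL ?_
    filter_upwards [self_mem_nhdsWithin, nhdsWithin_le_nhds (Ioi_mem_nhds hy.2)] with t h1 h2
    have h1 : t < 0 := h1
    have h2 : y < t := h2
    exact hmono t z ⟨by linarith [hy.1], by linarith⟩ ⟨by linarith [hz.1], hz.2⟩ (by linarith [hz.1])
  have hy' := abs_le.1 hyf'
  have hz' := abs_le.1 hzf'
  have a1 : 0 ≤ |F (-1) 0| * M := by positivity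
  have a2 : 0 ≤ |F 0 1| * M := by positivity
  rw [abs_le]
  constructor <;> nlinarith

lemma good_norm_aux (p : ℝ≥0∞) (hp : 1 ≤ p) (α β u v : ℝ) : ∃ c : ℝ, -1 ≤ u → u < v → v ≤ 1 →
    ∀ f : ℝ → ℝ, ∀ M : ℝ, 0 < M →
      LpOn (fun x => jacobi α β x * f x) p (-1) 1 ≤ ENNReal.ofReal M →
      ∃ x ∈ Ioo u v, |f x| ≤ c * M := by
  by_cases huv : -1 ≤ u ∧ u < v ∧ v ≤ 1
  swap
  · exact ⟨0, fun h1 h2 h3 => absurd ⟨h1, h2, h3⟩ huv⟩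
  obtain ⟨hu, huv, hv⟩ := huv
  set d := (v - u) / 3 with hd
  have hd0 : 0 < d := by rw [hd]; linarith
  have hcont : ContinuousOn (jacobi α β) (Icc (u + d) (v - d)) := by
    unfold jacobi
    intro x hx
    have h1 : 1 + x ≠ 0 := by linarith [hx.1]
    have h2 : 1 - x ≠ 0 := by linarith [hx.2]
    apply ContinuousAt.continuousWithinAt
    exact ((continuousAt_const.add continuousAt_id).rpow_const (Or.inl h1)).mul
      ((continuousAt_const.sub continuousAt_id).rpow_const (Or.inl h2))
  obtain ⟨x0, hx0, hmin⟩ := isCompact_Icc.exists_isMinOn (nonempty_Icc.2 (by linarith)) hcont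
  have hm : 0 < jacobi α β x0 := by
    unfold jacobi
    have h1 : 0 < 1 + x0 := by linarith [hx0.1]
    have h2 : 0 < 1 - x0 := by linarith [hx0.2]
    positivity
  set m := jacobi α β x0
  set l := d ^ (1 / p.toReal) with hl
  have hl0 : 0 < l := by positivity
  refine ⟨2 / (m * l), fun _ _ _ f M hM hN => ?_⟩
  by_contra! hcon
  have hsub : Icc (u + d) (v - d) ⊆ Icc (-1) 1 := Icc_subset_Icc (by linarith) (by linarith)
  have h1 : eLpNorm (fun _ : ℝ => 2 * M / l) p (volume.restrict (Icc (u + d) (v - d))) ≤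
      eLpNorm (fun x => jacobi α β x * f x) p (volume.restrict (Icc (u + d) (v - d))) := by
    apply eLpNorm_mono_ae
    rw [ae_restrict_iff' measurableSet_Icc]
    filter_upwards with x hx
    have hw : m ≤ jacobi α β x := hmin hx
    have hfx := hcon x ⟨by linarith [hx.1], by linarith [hx.2]⟩
    rw [Real.norm_eq_abs, Real.norm_eq_abs, abs_mul, abs_of_pos (by positivity : 0 < 2 * M / l),
      abs_of_pos (hm.trans_le hw)]
    calc 2 * M / l = m * (2 / (m * l) * M) := by field_simp
      _ ≤ jacobi α β x * |f x| := mul_le_mul hw hfx.le (by positivity) (hm.le.trans hw)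
  have h2 := eLpNorm_mono_measure (p := p) (fun x => jacobi α β x * f x)
    (Measure.restrict_mono hsub (le_refl (volume : Measure ℝ)))
  have hvol : volume (Icc (u + d) (v - d)) = ENNReal.ofReal d := by
    rw [Real.volume_Icc]; congr 1; rw [hd]; ring
  rw [eLpNorm_const _ (by positivity) (by
    rw [Ne, Measure.restrict_eq_zero, hvol]; simpa using hd0), Measure.restrict_apply_univ, hvol,
    Real.enorm_eq_ofReal (by positivity), ENNReal.ofReal_rpow_of_pos hd0,
    ← ENNReal.ofReal_mul (by positivity), ← hl, div_mul_cancel₀ _ hl0.ne'] at h1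
  have h3 := (h1.trans h2).trans hN
  rw [ENNReal.ofReal_le_ofReal_iff hM.le] at h3
  linarith

lemma good_norm (p : ℝ≥0∞) (hp : 1 ≤ p) (α β : ℝ) : ∃ F : ℝ → ℝ → ℝ,
    ∀ f : ℝ → ℝ, ∀ M : ℝ, 0 < M →
      LpOn (fun x => jacobi α β x * f x) p (-1) 1 ≤ ENNReal.ofReal M → GoodP F M f := by
  choose F hF using good_norm_aux p hp α β
  exact ⟨F, fun f M hM hN u v h1 h2 h3 => hF u v h1 h2 h3 f M hM hN⟩

lemma rpow_bd {x γ : ℝ} (h1 : 1 ≤ x) (h2 : x ≤ 2) : x ^ γ ≤ 2 ^ |γ| :=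
  (Real.rpow_le_rpow_of_exponent_le h1 (le_abs_self γ)).trans
    (Real.rpow_le_rpow (by linarith) h2 (abs_nonneg _))

lemma jacobi_bd (α β x : ℝ) (hx : x ∈ Icc (-1 : ℝ) 1) :
    ‖jacobi α β x‖ ≤ ‖(2 ^ |α| + 2 ^ |β|) * ((1 + x) ^ α + (1 - x) ^ β)‖ := by
  have h1 : 0 ≤ 1 + x := by linarith [hx.1]
  have h2 : 0 ≤ 1 - x := by linarith [hx.2]
  have a1 : 0 ≤ (1 + x) ^ α := by positivity
  have a2 : 0 ≤ (1 - x) ^ β := by positivity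
  have b1 : (0:ℝ) < 2 ^ |α| := by positivity
  have b2 : (0:ℝ) < 2 ^ |β| := by positivity
  rw [Real.norm_of_nonneg (by unfold jacobi; positivity), Real.norm_of_nonneg (by positivity), jacobi]
  rcases le_total x 0 with h | h
  · have := rpow_bd (x := 1 - x) (γ := β) (by linarith) (by linarith [hx.1])
    nlinarith [mul_nonneg a1 b1.le, mul_nonneg a2 b1.le, mul_nonneg a2 b2.le]
  · have := rpow_bd (x := 1 + x) (γ := α) (by linarith) (by linarith [hx.2])
    nlinarith [mul_nonneg a1 b1.le, mul_nonneg a1 b2.le, mul_nonneg a2 b2.le]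

lemma memLp_aux (p : ℝ≥0∞) (hp : 1 ≤ p) (α : ℝ) (hα : α ∈ Jset p) (g : ℝ → ℝ) (hg : Measurable g)
    (hgI : ∀ x ∈ Icc (-1:ℝ) 1, g x ∈ Icc (0:ℝ) 2)
    (hint : ∀ r : ℝ, -1 < r → IntegrableOn (fun x => (g x) ^ r) (Icc (-1) 1)) :
    MemLp (fun x => (g x) ^ α) p (volume.restrict (Icc (-1 : ℝ) 1)) := by
  have hm : AEStronglyMeasurable (fun x => (g x) ^ α) (volume.restrict (Icc (-1 : ℝ) 1)) :=
    (hg.pow_const α).aestronglyMeasurable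
  by_cases hpt : p = ∞
  · subst hpt
    simp [Jset] at hα
    apply memLp_top_of_bound hm (2 ^ α)
    rw [ae_restrict_iff' measurableSet_Icc]
    filter_upwards with x hx
    have := hgI x hx
    rw [Real.norm_of_nonneg (Real.rpow_nonneg this.1 _)]
    exact Real.rpow_le_rpow this.1 this.2 hα
  · have hp0 : p ≠ 0 := by positivity
    have hpr : 0 < p.toReal := ENNReal.toReal_pos hp0 hpt
    simp [Jset, hpt] at hα
    rw [← integrable_norm_rpow_iff hm hp0 hpt]
    refine (hint (α * p.toReal) ?_).congr ?_
    · rw [div_lt_iff₀ hpr] at hα; linarith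
    · rw [Filter.EventuallyEq, ae_restrict_iff' measurableSet_Icc]
      filter_upwards with x hx
      have := hgI x hx
      rw [Real.norm_of_nonneg (Real.rpow_nonneg this.1 _), Real.rpow_mul this.1]

lemma jacobi_fin (p : ℝ≥0∞) (hp : 1 ≤ p) (α β : ℝ) (hα : α ∈ Jset p) (hβ : β ∈ Jset p) :
    LpOn (jacobi α β) p (-1) 1 < ⊤ := by
  have m1 := memLp_aux p hp α hα (fun x => 1 + x) (by fun_prop)
    (fun x hx => ⟨by linarith [hx.1], by linarith [hx.2]⟩) (fun r hr => by
      have := (intervalIntegral.intervalIntegrable_rpow' (a := 0) (b := 2) hr).comp_add_left 1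
      rw [intervalIntegrable_iff_integrableOn_Icc_of_le (by norm_num)] at this
      norm_num at this
      exact this)
  have m2 := memLp_aux p hp β hβ (fun x => 1 - x) (by fun_prop)
    (fun x hx => ⟨by linarith [hx.2], by linarith [hx.1]⟩) (fun r hr => by
      have := ((intervalIntegral.intervalIntegrable_rpow' (a := 0) (b := 2) hr).comp_sub_left 1).symm
      norm_num at this
      rw [intervalIntegrable_iff_integrableOn_Icc_of_le (by norm_num)] at this
      exact this)
  have m3 := (m1.add m2).const_mul (2 ^ |α| + 2 ^ |β|)
  refine lt_of_le_of_lt ?_ m3.2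
  apply eLpNorm_mono_ae
  rw [ae_restrict_iff' measurableSet_Icc]
  filter_upwards with x hx
  exact jacobi_bd α β x hx

lemma coef_bound (k : ℕ) (hk : 1 ≤ k) (F : ℝ → ℝ → ℝ) : ∃ C : ℝ, 0 ≤ C ∧ ∀ f, kM k (-1) 1 f →
    ∀ M : ℝ, 0 < M → GoodP F M f → ∀ L : ℝ, 
    (if k = 1 then Filter.Tendsto f (nhdsWithin 0 (Iio 0)) (nhds L)
       else HasDerivWithinAt (iteratedDeriv (k - 2) f) L (Iic 0) 0) →
    |L| ≤ C * M ∧ ∀ i < k - 1, |iteratedDeriv i f 0| ≤ C * M := by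
  by_cases h1 : k = 1
  · subst h1
    obtain ⟨C, hC, h⟩ := k_one F
    refine ⟨C, hC, fun f hf M hM hG L hL => ⟨h f hf M hM hG L (by simpa using hL), by simp⟩⟩
  · obtain ⟨n, rfl⟩ : ∃ n, k = n + 2 := ⟨k - 2, by omega⟩
    obtain ⟨C, hC, h⟩ := main_ind n F
    refine ⟨C, hC, fun f hf M hM hG L hL => h f hf M hM hG L (by simpa using hL)⟩

theorem statement9 (k : ℕ) (hk : 1 ≤ k) (p : ℝ≥0∞) (hp : 1 ≤ p) (α β : ℝ)
    (hα : α ∈ Jset p) (hβ : β ∈ Jset p) :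
    ∃ c > (0 : ℝ), ∀ f : ℝ → ℝ, f ∈ MSet k ∩ WSet p α β → ∀ L : ℝ,
      (if k = 1 then Filter.Tendsto f (nhdsWithin 0 (Iio 0)) (nhds L)
       else HasDerivWithinAt (iteratedDeriv (k - 2) f) L (Iic 0) 0) →
      LpOn (fun x => jacobi α β x *
          (L * x ^ (k - 1) / (Nat.factorial (k - 1) : ℝ) +
            ∑ i ∈ Finset.range (k - 1), iteratedDeriv i f 0 * x ^ i / (Nat.factorial i : ℝ)))
          p (-1) 1 ≤
        ENNReal.ofReal c * LpOn (fun x => jacobi α β x * f x) p (-1) 1 := by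

  obtain ⟨F, hF⟩ := good_norm p hp α β
  obtain ⟨C, hC, hCf⟩ := coef_bound k hk F
  have hW := jacobi_fin p hp α β hα hβ
  set W := LpOn (jacobi α β) p (-1) 1 with hWdef
  refine ⟨k * C * W.toReal + 1, by positivity, fun f hf L hL => ?_⟩
  obtain ⟨hfM, -, hfN⟩ := hf
  have hkM := kM_of hfM
  set N := LpOn (fun x => jacobi α β x * f x) p (-1) 1 with hN
  have hNr : ENNReal.ofReal N.toReal = N := ENNReal.ofReal_toReal hfN
  have hcoef : |L| ≤ C * N.toReal ∧ ∀ i < k - 1, |iteratedDeriv i f 0| ≤ C * N.toReal := by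
    have hall : ∀ M : ℝ, N.toReal < M →
        |L| ≤ C * M ∧ ∀ i < k - 1, |iteratedDeriv i f 0| ≤ C * M := by
      intro M hM
      have hM0 : 0 < M := ENNReal.toReal_nonneg.trans_lt hM
      exact hCf f hkM M hM0 (hF f M hM0 (by
        rw [← hN, ← hNr]; exact ENNReal.ofReal_le_ofReal hM.le)) L hL
    have hlim : Tendsto (fun M => C * M) (nhdsWithin N.toReal (Ioi N.toReal)) (nhds (C * N.toReal)) := by
      have : Continuous (fun M : ℝ => C * M) := by fun_prop
      exact this.continuousAt.tendsto.mono_left nhdsWithin_le_nhds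
    constructor
    · refine ge_of_tendsto hlim ?_
      filter_upwards [self_mem_nhdsWithin] with M hM
      exact (hall M hM).1
    · intro i hi
      refine ge_of_tendsto hlim ?_
      filter_upwards [self_mem_nhdsWithin] with M hM
      exact (hall M hM).2 i hi
  have hterm : ∀ (a x : ℝ) (i : ℕ), |x| ≤ 1 → |a| ≤ C * N.toReal →
      |a * x ^ i / (Nat.factorial i : ℝ)| ≤ C * N.toReal := by
    intro a x i hx ha
    rw [abs_div, abs_mul, abs_pow, Nat.abs_cast]
    have h1 : (1:ℝ) ≤ Nat.factorial i := by exact_mod_cast Nat.factorial_pos i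
    have h2 : |x| ^ i ≤ 1 := pow_le_one₀ (abs_nonneg _) hx
    refine (div_le_self (by positivity) h1).trans ?_
    exact (mul_le_of_le_one_right (abs_nonneg _) h2).trans ha
  have hle : LpOn (fun x => jacobi α β x *
          (L * x ^ (k - 1) / (Nat.factorial (k - 1) : ℝ) +
            ∑ i ∈ Finset.range (k - 1), iteratedDeriv i f 0 * x ^ i / (Nat.factorial i : ℝ)))
          p (-1) 1 ≤ ENNReal.ofReal (k * (C * N.toReal)) * W := by
    apply eLpNorm_le_mul_eLpNorm_of_ae_le_mul
    rw [ae_restrict_iff' measurableSet_Icc]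
    filter_upwards with x hx
    have hx1 : |x| ≤ 1 := abs_le.2 hx
    rw [norm_mul, mul_comm]
    apply mul_le_mul_of_nonneg_right _ (norm_nonneg _)
    rw [Real.norm_eq_abs]
    refine (abs_add_le _ _).trans ?_
    have s1 := hterm L x (k - 1) hx1 hcoef.1
    have s2 : |∑ i ∈ Finset.range (k - 1), iteratedDeriv i f 0 * x ^ i / (Nat.factorial i : ℝ)| ≤
        (k - 1 : ℕ) * (C * N.toReal) := by
      refine (Finset.abs_sum_le_sum_abs _ _).trans ?_
      have := Finset.sum_le_card_nsmul (Finset.range (k - 1))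
        (fun i => |iteratedDeriv i f 0 * x ^ i / (Nat.factorial i : ℝ)|) (C * N.toReal)
        (fun i hi => hterm _ x i hx1 (hcoef.2 i (Finset.mem_range.1 hi)))
      simpa using this
    have hk1 : (k : ℝ) = (k - 1 : ℕ) + 1 := by exact_mod_cast (by omega : k = (k - 1) + 1)
    rw [hk1]
    linarith
  refine hle.trans ?_
  have hWr : ENNReal.ofReal W.toReal = W := ENNReal.ofReal_toReal hW.ne
  rw [← hWr, ← ENNReal.ofReal_mul (by positivity)]
  conv_rhs => rw [← hNr]
  rw [← ENNReal.ofReal_mul (by positivity)]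
  apply ENNReal.ofReal_le_ofReal
  rw [ENNReal.toReal_ofReal ENNReal.toReal_nonneg]
  have : 0 ≤ N.toReal := ENNReal.toReal_nonneg
  nlinarith
end
end
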